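/- arXiv:2402.05695 — 2 statements merged into one kernel-verified Lean document; each statement's English description precedes it below -/
import Mathlib

section
/- Let F be a CPLIFS with attractor Λ whose generated self-similar IFS has no exact overlapping (so that F is limit-irreducible), and let s ∈ (0, dim_H Λ), where dim_H denotes Hausdorff dimension. Then for every ε > 0 there exists δ > 0 such that every CPLIFS F̂ that is δ-close to F satisfies Φ(s) − ε < Φ̂(s), where Φ and Φ̂ are the natural pressure functions of F and F̂. -/
open Set Filter MeasureTheory

noncomputable section

/-- Composition `f_{i₁} ∘ ⋯ ∘ f_{iₙ}` of a family of maps of `ℝ` along a finite word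
(the empty composition being the identity). -/
def compFam {ι : Type*} (S : ι → ℝ → ℝ) (w : List ι) : ℝ → ℝ :=
  w.foldr (fun k g => S k ∘ g) id

/-- A family of maps of `ℝ` has *no exact overlapping* if for every `n ≥ 1` and all words
`ī, j̄` of length `n`, equality of the compositions `S_ī = S_j̄` (as functions) implies
`ī = j̄`. -/
def NoExactOverlap {ι : Type*} (S : ι → ℝ → ℝ) : Prop :=
  ∀ n : ℕ, 1 ≤ n → ∀ i j : Fin n → ι,
    compFam S (List.ofFn i) = compFam S (List.ofFn j) → i = j

/-- The supporting interval `I` of the system `{f_1, …, f_m}`:  if the maps have a common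
fixed point `φ` (i.e. the attractor is the single point `φ`) it is `[φ - 1/2, φ + 1/2]`;
otherwise it is the smallest nonempty compact interval sent into itself by all the maps,
i.e. the intersection of all such intervals. -/
def suppInt {m : ℕ} (f : Fin m → ℝ → ℝ) : Set ℝ :=
  haveI := Classical.propDecidable (∃ φ : ℝ, ∀ k, f k φ = φ)
  if h : ∃ φ : ℝ, ∀ k, f k φ = φ then
    Set.Icc (h.choose - 1 / 2) (h.choose + 1 / 2)
  else
    ⋂₀ {J : Set ℝ | J.Nonempty ∧ (∃ a b : ℝ, J = Set.Icc a b) ∧ ∀ k, f k '' J ⊆ J}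

/-- The natural pressure function
`Φ(s) = limsup_{n → ∞} (1/n) log ∑_{(i₁,…,iₙ)} |I_{i₁…iₙ}|ˢ`,
where `I_{i₁…iₙ} = f_{i₁} ∘ ⋯ ∘ f_{iₙ} (I)` are the cylinder intervals and `|·|` denotes
the length (diameter) of an interval. -/
def pressure {m : ℕ} (f : Fin m → ℝ → ℝ) (s : ℝ) : ℝ :=
  Filter.limsup
    (fun n : ℕ =>
      (n : ℝ)⁻¹ * Real.log (∑ w : Fin n → Fin m,
        Metric.diam (compFam f (List.ofFn w) '' suppInt f) ^ s))
    Filter.atTop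

/-- A continuous piecewise linear iterated function system (CPLIFS) consisting of `m ≥ 2`
continuous piecewise linear maps `f k : ℝ → ℝ`; the map `f k` has the `l k` breaking points
`b k 0 < … < b k (l k - 1)` and on the `i`-th open interval of linearity determined by them
it coincides with the affine map `x ↦ ρ k i * x + t k i`, where the slopes satisfy
`0 < |ρ k i| < 1` and consecutive slopes of each map are distinct. -/
structure CPLIFS (m : ℕ) (l : Fin m → ℕ) : Type where
  f : Fin m → ℝ → ℝ
  b : (k : Fin m) → Fin (l k) → ℝ
  ρ : (k : Fin m) → Fin (l k + 1) → ℝ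
  t : (k : Fin m) → Fin (l k + 1) → ℝ
  hm : 2 ≤ m
  hb : ∀ k, StrictMono (b k)
  hρ0 : ∀ k i, ρ k i ≠ 0
  hρ1 : ∀ k i, |ρ k i| < 1
  hconsec : ∀ k (i : Fin (l k)), ρ k i.castSucc ≠ ρ k i.succ
  hcont : ∀ k, Continuous (f k)
  haff : ∀ (k : Fin m) (i : Fin (l k + 1)) (x : ℝ),
    (∀ j : Fin (l k), (j : ℕ) < (i : ℕ) → b k j < x) →
    (∀ j : Fin (l k), (i : ℕ) ≤ (j : ℕ) → x < b k j) →
    f k x = ρ k i * x + t k i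

namespace CPLIFS

variable {m : ℕ} {l : Fin m → ℕ}

/-- The index set of the affine pieces of a CPLIFS. -/
abbrev Idx (m : ℕ) (l : Fin m → ℕ) := Σ k : Fin m, Fin (l k + 1)

/-- The self-similar IFS generated by a CPLIFS: the family of affine maps
`S_{k,i} x = ρ_{k,i} x + t_{k,i}` coinciding with `f k` on its `i`-th interval of
linearity. -/
def S (F : CPLIFS m l) (p : Idx m l) : ℝ → ℝ :=
  fun x => F.ρ p.1 p.2 * x + F.t p.1 p.2

/-- The supporting interval of a CPLIFS. -/
def supp (F : CPLIFS m l) : Set ℝ := suppInt F.f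

/-- `𝓘 = f_1(I) ∪ … ∪ f_m(I)`. -/
def bigI (F : CPLIFS m l) : Set ℝ := ⋃ k, F.f k '' F.supp

/-- The `i`-th open interval of linearity of `f k`. -/
def J (F : CPLIFS m l) (k : Fin m) (i : Fin (l k + 1)) : Set ℝ :=
  {x : ℝ | (∀ j : Fin (l k), (j : ℕ) < (i : ℕ) → F.b k j < x) ∧
           (∀ j : Fin (l k), (i : ℕ) ≤ (j : ℕ) → x < F.b k j)}

/-- The set of critical points of a CPLIFS: the `f k`-images of the endpoints of `I` and of
the breaking points, together with the points of `𝓘` at which two different branches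
(local inverses of affine pieces) agree. -/
def crit (F : CPLIFS m l) : Set ℝ :=
  (⋃ k, ({F.f k (sInf F.supp), F.f k (sSup F.supp)} : Set ℝ)) ∪
  (⋃ k, ⋃ j : Fin (l k), ({F.f k (F.b k j)} : Set ℝ)) ∪
  {x ∈ F.bigI | ∃ p q : Idx m l, p ≠ q ∧
      x ∈ F.f p.1 '' F.J p.1 p.2 ∧ x ∈ F.f q.1 '' F.J q.1 q.2 ∧
      (x - F.t p.1 p.2) / F.ρ p.1 p.2 = (x - F.t q.1 q.2) / F.ρ q.1 q.2}

/-- `Z : Fin N → ℝ × ℝ` is an (ordered) monotonicity partition of the CPLIFS `F` if the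
closed intervals `[Z i .1, Z i .2]` are nondegenerate, ordered, cover `𝓘`, their endpoints
are critical points, and their interiors contain no critical point. -/
def IsMonoPartition (F : CPLIFS m l) (N : ℕ) (Z : Fin N → ℝ × ℝ) : Prop :=
  (∀ i, (Z i).1 < (Z i).2) ∧
  (∀ i j : Fin N, i < j → (Z i).2 ≤ (Z j).1) ∧
  (⋃ i, Set.Icc (Z i).1 (Z i).2) = F.bigI ∧
  (∀ i, (Z i).1 ∈ F.crit ∧ (Z i).2 ∈ F.crit) ∧
  (∀ i, Set.Ioo (Z i).1 (Z i).2 ∩ F.crit = ∅)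

/-- Two CPLIFSs (necessarily with the same number of maps and the same numbers of breaking
points) are ε-close if (a) their monotonicity partitions have the same cardinality and
corresponding intervals have endpoints within ε, (c) the logarithms of the absolute values
of corresponding slopes differ by less than ε, and (d) `sup_x |f_k x - g_k x| < ε`. -/
def Close (ε : ℝ) (F G : CPLIFS m l) : Prop :=
  (∃ (N : ℕ) (Z W : Fin N → ℝ × ℝ), F.IsMonoPartition N Z ∧ G.IsMonoPartition N W ∧
      ∀ i, |(Z i).1 - (W i).1| < ε ∧ |(Z i).2 - (W i).2| < ε) ∧
  (∀ k i, abs (Real.log |F.ρ k i| - Real.log |G.ρ k i|) < ε) ∧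
  (∀ k x, |F.f k x - G.f k x| < ε)

end CPLIFS


lemma aux_exists_piece {n : ℕ} (b : Fin n → ℝ) (hb : StrictMono b) (x : ℝ) :
    ∃ i : Fin (n + 1), (∀ j : Fin n, (j : ℕ) < (i : ℕ) → b j ≤ x) ∧
      (∀ j : Fin n, (i : ℕ) ≤ (j : ℕ) → x < b j) := by
  classical
  have hex : ∃ i : ℕ, ∀ j : Fin n, i ≤ (j : ℕ) → x < b j :=
    ⟨n, fun j hj => absurd j.2 (by omega)⟩
  have hle : Nat.find hex ≤ n := Nat.find_min' hex (fun j hj => absurd j.2 (by omega))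
  refine ⟨⟨Nat.find hex, by omega⟩, ?_, ?_⟩
  · intro j hj
    by_contra hlt
    push Not at hlt
    refine Nat.find_min hex hj ?_
    intro j' hj'
    exact lt_of_lt_of_le hlt (hb.monotone (Fin.le_def.2 hj'))
  · exact Nat.find_spec hex

namespace CPLIFS

variable {m : ℕ} {l : Fin m → ℕ}

/-- closed pieces -/
def CP (F : CPLIFS m l) (k : Fin m) (i : Fin (l k + 1)) : Set ℝ :=
  {x : ℝ | (∀ j : Fin (l k), (j : ℕ) < (i : ℕ) → F.b k j ≤ x) ∧
           (∀ j : Fin (l k), (i : ℕ) ≤ (j : ℕ) → x ≤ F.b k j)}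

lemma J_nonempty (F : CPLIFS m l) (k : Fin m) (i : Fin (l k + 1)) : (F.J k i).Nonempty := by
  classical
  obtain ⟨z, h1, h2⟩ := Order.exists_between_finsets
    (lo := (Finset.univ.filter (fun j : Fin (l k) => (j : ℕ) < (i : ℕ))).image (F.b k))
    (hi := (Finset.univ.filter (fun j : Fin (l k) => (i : ℕ) ≤ (j : ℕ))).image (F.b k)) (by
      intro x hx y hy
      simp only [Finset.mem_image, Finset.mem_filter, Finset.mem_univ, true_and] at hx hy
      obtain ⟨j, hj, rfl⟩ := hx
      obtain ⟨j', hj', rfl⟩ := hy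
      exact F.hb k (Fin.lt_def.2 (by omega)))
  refine ⟨z, ?_, ?_⟩
  · intro j hj
    exact h1 _ (Finset.mem_image_of_mem _ (by simpa using hj))
  · intro j hj
    exact h2 _ (Finset.mem_image_of_mem _ (by simpa using hj))

lemma eq_on_CP (F : CPLIFS m l) (k : Fin m) (i : Fin (l k + 1)) {x : ℝ} (hx : x ∈ F.CP k i) :
    F.f k x = F.ρ k i * x + F.t k i := by
  obtain ⟨z, hz⟩ := F.J_nonempty k i
  have hc := F.hcont k
  have hu : Continuous (fun u : ℝ => x + u * (z - x)) := by fun_prop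
  have h1 : Tendsto (fun u : ℝ => F.f k (x + u * (z - x))) (nhdsWithin 0 (Ioo 0 1))
      (nhds (F.f k (x + 0 * (z - x)))) :=
    ((hc.comp hu).tendsto 0).mono_left nhdsWithin_le_nhds
  have h2 : Tendsto (fun u : ℝ => F.ρ k i * (x + u * (z - x)) + F.t k i)
      (nhdsWithin 0 (Ioo 0 1)) (nhds (F.ρ k i * (x + 0 * (z - x)) + F.t k i)) := by
    have : Continuous (fun u : ℝ => F.ρ k i * (x + u * (z - x)) + F.t k i) := by fun_prop
    exact (this.tendsto 0).mono_left nhdsWithin_le_nhds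
  have h3 : (fun u : ℝ => F.f k (x + u * (z - x))) =ᶠ[nhdsWithin 0 (Ioo 0 1)]
      (fun u : ℝ => F.ρ k i * (x + u * (z - x)) + F.t k i) := by
    filter_upwards [self_mem_nhdsWithin] with u hu
    apply F.haff
    · intro j hj
      have := hx.1 j hj
      have := hz.1 j hj
      nlinarith [hu.1, hu.2]
    · intro j hj
      have := hx.2 j hj
      have := hz.2 j hj
      nlinarith [hu.1, hu.2]
  have : (nhdsWithin (0:ℝ) (Ioo 0 1)).NeBot := by
    rw [nhdsWithin_Ioo_eq_nhdsGT (by norm_num)]; infer_instance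
  have := tendsto_nhds_unique (h1.congr' h3) h2
  simpa using this

lemma exists_CP (F : CPLIFS m l) (k : Fin m) (x : ℝ) : ∃ i, x ∈ F.CP k i := by
  obtain ⟨i, h1, h2⟩ := aux_exists_piece (F.b k) (F.hb k) x
  exact ⟨i, h1, fun j hj => (h2 j hj).le⟩

lemma isClosed_CP (F : CPLIFS m l) (k : Fin m) (i : Fin (l k + 1)) : IsClosed (F.CP k i) := by
  have : F.CP k i = (⋂ j : Fin (l k), ⋂ _ : (j : ℕ) < (i : ℕ), Ici (F.b k j)) ∩
      (⋂ j : Fin (l k), ⋂ _ : (i : ℕ) ≤ (j : ℕ), Iic (F.b k j)) := by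
    ext x; simp [CP]
  rw [this]
  exact (isClosed_iInter fun j => isClosed_iInter fun _ => isClosed_Ici).inter
    (isClosed_iInter fun j => isClosed_iInter fun _ => isClosed_Iic)

lemma f_lip (F : CPLIFS m l) {r : ℝ} (hr : ∀ k i, |F.ρ k i| ≤ r) (k : Fin m) (x y : ℝ) :
    |F.f k x - F.f k y| ≤ r * |x - y| := by
  classical
  wlog hxy : y ≤ x generalizing x y
  · rw [abs_sub_comm, abs_sub_comm x y]; exact this y x (by linarith)
  choose p hp1 hp2 using fun z => aux_exists_piece (F.b k) (F.hb k) z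
  have hd : ∀ z ∈ Ico y x, HasDerivWithinAt (F.f k) (F.ρ k (p z)) (Ici z) z := by
    intro z _
    have hev : ∀ᶠ u in nhdsWithin z (Ici z), F.f k u = F.ρ k (p z) * u + F.t k (p z) := by
      have h1 : ∀ᶠ u in nhdsWithin z (Ici z), ∀ j : Fin (l k), ((p z : ℕ) ≤ (j : ℕ) → u ≤ F.b k j) := by
        rw [Filter.eventually_all]
        intro j
        by_cases hj : (p z : ℕ) ≤ (j : ℕ)
        · have := (eventually_lt_nhds (hp2 z j hj)).filter_mono (nhdsWithin_le_nhds (s := Ici z))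
          filter_upwards [this] with u hu _ using hu.le
        · exact Filter.Eventually.of_forall fun u h => absurd h hj
      filter_upwards [h1, self_mem_nhdsWithin] with u hu hz
      exact F.eq_on_CP k (p z) ⟨fun j hj => (hp1 z j hj).trans hz, hu⟩
    have h0 : HasDerivWithinAt (fun u => F.ρ k (p z) * u + F.t k (p z)) (F.ρ k (p z)) (Ici z) z := by
      simpa using ((hasDerivAt_id z).const_mul (F.ρ k (p z))).add_const (F.t k (p z)) |>.hasDerivWithinAt
    exact h0.congr_of_eventuallyEq hev (hev.self_of_nhdsWithin self_mem_Ici)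
  have := norm_image_sub_le_of_norm_deriv_right_le_segment (f := F.f k) (a := y) (b := x) (C := r)
    (F.hcont k).continuousOn hd (fun z _ => by simpa using hr k (p z)) x ⟨hxy, le_rfl⟩
  rw [Real.norm_eq_abs] at this
  rwa [abs_of_nonneg (by linarith : 0 ≤ x - y)]

open scoped Pointwise in
lemma diam_image_CP (F : CPLIFS m l) (k : Fin m) (i : Fin (l k + 1)) (A : Set ℝ)
    (hA : A ⊆ F.CP k i) : Metric.diam (F.f k '' A) = |F.ρ k i| * Metric.diam A := by
  have h1 : F.f k '' A = (fun y => F.t k i + y) '' (F.ρ k i • A) := by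
    rw [← Set.image_smul, Set.image_image]
    apply Set.image_congr
    intro a ha
    rw [F.eq_on_CP k i (hA ha)]; simp [add_comm]
  rw [h1, (isometry_add_left (F.t k i)).diam_image, diam_smul₀, Real.norm_eq_abs]

lemma diam_image_ge (F : CPLIFS m l) {a : ℝ} (k : Fin m) (ha : ∀ i, a * (l k + 1 : ℝ) ≤ |F.ρ k i|)
    (ha0 : 0 ≤ a)
    (A : Set ℝ) (hA : ∃ x y, x ≤ y ∧ A = Icc x y) :
    a * Metric.diam A ≤ Metric.diam (F.f k '' A) := by
  obtain ⟨x, y, hxy, rfl⟩ := hA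
  rw [Real.diam_Icc hxy]
  by_contra hcon
  push Not at hcon
  have hcpt : IsCompact (F.f k '' Icc x y) := isCompact_Icc.image (F.hcont k)
  have hbd := hcpt.isBounded
  have hpos : (0:ℝ) < l k + 1 := by positivity
  have hapos : 0 < a * (y - x) := lt_of_le_of_lt Metric.diam_nonneg hcon
  have hi : ∀ i, volume (F.CP k i ∩ Icc x y) ≤ ENNReal.ofReal (Metric.diam (F.f k '' Icc x y) / (a * (l k + 1))) := by
    intro i
    have hb : Bornology.IsBounded (F.CP k i ∩ Icc x y) := (Metric.isBounded_Icc x y).subset inter_subset_right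
    refine (Real.volume_le_diam _).trans ?_
    rw [← ENNReal.ofReal_toReal hb.ediam_ne_top]
    apply ENNReal.ofReal_le_ofReal
    have h1 := F.diam_image_CP k i (F.CP k i ∩ Icc x y) inter_subset_left
    have h2 : Metric.diam (F.f k '' (F.CP k i ∩ Icc x y)) ≤ Metric.diam (F.f k '' Icc x y) :=
      Metric.diam_mono (image_mono inter_subset_right) hbd
    have ha1 : 0 < a := by
      rcases ha0.eq_or_lt with h | h
      · rw [← h] at hapos; simp at hapos
      · exact h
    rw [le_div_iff₀ (by positivity)]
    have := mul_le_mul_of_nonneg_right (ha i) (Metric.diam_nonneg (s := F.CP k i ∩ Icc x y))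
    change Metric.diam (F.CP k i ∩ Icc x y) * _ ≤ _
    nlinarith
  have hcov : Icc x y ⊆ ⋃ i, (F.CP k i ∩ Icc x y) := by
    intro z hz
    obtain ⟨i, hi⟩ := F.exists_CP k z
    exact mem_iUnion.2 ⟨i, hi, hz⟩
  have h3 : volume (Icc x y) ≤ ENNReal.ofReal ((l k + 1) * (Metric.diam (F.f k '' Icc x y) / (a * (l k + 1)))) := by
    calc volume (Icc x y) ≤ volume (⋃ i, (F.CP k i ∩ Icc x y)) := measure_mono hcov
      _ ≤ ∑ i, volume (F.CP k i ∩ Icc x y) := measure_iUnion_fintype_le _ _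
      _ ≤ ∑ i : Fin (l k + 1), ENNReal.ofReal (Metric.diam (F.f k '' Icc x y) / (a * (l k + 1))) :=
          Finset.sum_le_sum fun i _ => hi i
      _ = _ := by
          rw [Finset.sum_const, Finset.card_univ, Fintype.card_fin, ENNReal.ofReal_mul hpos.le,
            nsmul_eq_mul]
          congr 1
          rw [ENNReal.ofReal_add (by positivity) (by norm_num)]
          simp
  rw [Real.volume_Icc] at h3
  have ha1 : 0 < a := by
    rcases ha0.eq_or_lt with h | h
    · rw [← h] at hapos; simp at hapos
    · exact h
  rw [ENNReal.ofReal_le_ofReal_iff (by positivity)] at h3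
  have h4 : (l k + 1) * (Metric.diam (F.f k '' Icc x y) / (a * (l k + 1))) = Metric.diam (F.f k '' Icc x y) / a := by
    field_simp
  rw [h4, le_div_iff₀ ha1] at h3
  linarith

lemma kink (F G : CPLIFS m l) {δ e : ℝ} (he : 0 < e) (k : Fin m)
    (hsep : ∀ j j' : Fin (l k), j < j' → 2 * e ≤ F.b k j' - F.b k j)
    (hδ : ∀ j : Fin (l k), 4 * δ ≤ e * |F.ρ k j.castSucc - F.ρ k j.succ|)
    (hFG : ∀ x, |F.f k x - G.f k x| < δ) (j : Fin (l k)) : |F.b k j - G.b k j| < e := by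
  have key : ∀ j, ∃ j', |F.b k j - G.b k j'| < e := by
    intro j
    by_contra hcon
    push Not at hcon
    obtain ⟨i, hi1, hi2⟩ := aux_exists_piece (G.b k) (G.hb k) (F.b k j)
    have hG : ∀ z, |z - F.b k j| ≤ e → z ∈ G.CP k i := by
      intro z hz
      rw [abs_le] at hz
      constructor
      · intro j' hj'
        have h1 := hi1 j' hj'
        have h2 := hcon j'
        rw [abs_of_nonneg (by linarith)] at h2
        linarith
      · intro j' hj'
        have h1 := hi2 j' hj'
        have h2 := hcon j'
        rw [abs_of_nonpos (by linarith)] at h2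
        linarith
    have g1 := G.eq_on_CP k i (hG (F.b k j - e) (by simp [abs_of_pos he]))
    have g2 := G.eq_on_CP k i (hG (F.b k j + e) (by simp [abs_of_pos he]))
    have g3 := G.eq_on_CP k i (hG (F.b k j) (by simp [he.le]))
    have hlo : ∀ z, F.b k j - e ≤ z → z ≤ F.b k j → z ∈ F.CP k j.castSucc := by
      intro z h1 h2
      constructor
      · intro j' hj'
        have := hsep j' j (Fin.lt_def.2 (by simpa using hj'))
        linarith
      · intro j' hj'
        have := (F.hb k).monotone (Fin.le_def.2 (by simpa using hj') : j ≤ j')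
        linarith
    have hhi : ∀ z, F.b k j ≤ z → z ≤ F.b k j + e → z ∈ F.CP k j.succ := by
      intro z h1 h2
      constructor
      · intro j' hj'
        have hj2 : (j' : ℕ) ≤ j := by simp at hj'; omega
        have := (F.hb k).monotone (Fin.le_def.2 hj2 : j' ≤ j)
        linarith
      · intro j' hj'
        have hj2 : (j : ℕ) < j' := by simp at hj'; omega
        have := hsep j j' (Fin.lt_def.2 hj2)
        linarith
    have f1 := F.eq_on_CP k _ (hlo (F.b k j - e) le_rfl (by linarith))
    have f2 := F.eq_on_CP k _ (hhi (F.b k j + e) (by linarith) le_rfl)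
    have f3 := F.eq_on_CP k _ (hlo (F.b k j) (by linarith) le_rfl)
    have f4 := F.eq_on_CP k _ (hhi (F.b k j) le_rfl (by linarith))
    have d1 := abs_lt.1 (hFG (F.b k j - e))
    have d2 := abs_lt.1 (hFG (F.b k j + e))
    have d3 := abs_lt.1 (hFG (F.b k j))
    have e1 : F.f k (F.b k j - e) + F.f k (F.b k j + e) - 2 * F.f k (F.b k j)
        = - (e * (F.ρ k j.castSucc - F.ρ k j.succ)) := by
      linear_combination f1 + f2 - f3 - f4
    have e2 : G.f k (F.b k j - e) + G.f k (F.b k j + e) - 2 * G.f k (F.b k j) = 0 := by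
      linear_combination g1 + g2 - 2 * g3
    have e3 : |e * (F.ρ k j.castSucc - F.ρ k j.succ)| < 4 * δ := by
      rw [abs_lt]; constructor <;> linarith
    rw [abs_mul, abs_of_pos he] at e3
    linarith [hδ j]
  choose φ hφ using key
  have hmono : StrictMono φ := by
    intro j j' hjj'
    have h1 := abs_lt.1 (hφ j)
    have h2 := abs_lt.1 (hφ j')
    have h3 := hsep j j' hjj'
    exact (G.hb k).lt_iff_lt.1 (by linarith)
  have hsurj := Finite.injective_iff_surjective.1 hmono.injective
  have : φ = id := (hmono.range_inj strictMono_id).1 (by simp [hsurj.range_eq])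
  simpa [this] using hφ j

end CPLIFS

namespace CPLIFS

variable {m : ℕ} {l : Fin m → ℕ}

lemma compFam_append {ι : Type*} (S : ι → ℝ → ℝ) (u v : List ι) (x : ℝ) :
    compFam S (u ++ v) x = compFam S u (compFam S v x) := by
  induction u with
  | nil => rfl
  | cons k u ih => simp only [List.cons_append]; exact congrArg (S k) ih

lemma compFam_cons {ι : Type*} (S : ι → ℝ → ℝ) (k : ι) (v : List ι) (x : ℝ) :
    compFam S (k :: v) x = S k (compFam S v x) := rfl

lemma compFam_affine (F : CPLIFS m l) (p : List (Idx m l)) :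
    ∃ A B : ℝ, ∀ x, compFam F.S p x = A * x + B := by
  induction p with
  | nil => exact ⟨1, 0, fun x => by simp [compFam]⟩
  | cons k p ih =>
    obtain ⟨A, B, h⟩ := ih
    exact ⟨F.ρ k.1 k.2 * A, F.ρ k.1 k.2 * B + F.t k.1 k.2, fun x => by
      rw [compFam_cons, h]; simp only [S]; ring⟩

lemma compFam_lift (F : CPLIFS m l) (v : List (Fin m)) (x : ℝ) :
    ∃ p : List (Idx m l), compFam F.f v x = compFam F.S p x := by
  induction v with
  | nil => exact ⟨[], rfl⟩
  | cons k v ih =>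
    obtain ⟨p, hp⟩ := ih
    obtain ⟨i, hi⟩ := F.exists_CP k (compFam F.f v x)
    refine ⟨⟨k, i⟩ :: p, ?_⟩
    rw [compFam_cons, compFam_cons, ← hp, F.eq_on_CP k i hi]
    rfl

lemma b_mem_castSucc (F : CPLIFS m l) (k : Fin m) (j : Fin (l k)) :
    F.b k j ∈ F.CP k j.castSucc :=
  ⟨fun j' hj' => (F.hb k).monotone (Fin.le_def.2 (by simp at hj'; omega)),
   fun j' hj' => (F.hb k).monotone (Fin.le_def.2 (by simp at hj'; omega))⟩

lemma b_mem_succ (F : CPLIFS m l) (k : Fin m) (j : Fin (l k)) :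
    F.b k j ∈ F.CP k j.succ :=
  ⟨fun j' hj' => (F.hb k).monotone (Fin.le_def.2 (by simp at hj'; omega)),
   fun j' hj' => (F.hb k).monotone (Fin.le_def.2 (by simp at hj'; omega))⟩

lemma noOverlap_list (F : CPLIFS m l) (hno : NoExactOverlap F.S) (u v : List (Idx m l))
    (hu : u ≠ []) (huv : u.length = v.length) (h : compFam F.S u = compFam F.S v) : u = v := by
  obtain ⟨n, hn⟩ : ∃ n, u.length = n := ⟨_, rfl⟩
  have hv : v.length = n := by omega
  have h1 : List.ofFn (fun i : Fin n => u.get (i.cast hn.symm)) = u := by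
    subst hn; exact List.ofFn_get u
  have h2 : List.ofFn (fun i : Fin n => v.get (i.cast hv.symm)) = v := by
    subst hv; exact List.ofFn_get v
  have := hno n (by rw [← hn]; exact List.length_pos_of_ne_nil hu)
    (fun i : Fin n => u.get (i.cast hn.symm)) (fun i : Fin n => v.get (i.cast hv.symm))
    (by rw [h1, h2]; exact h)
  rw [← h1, ← h2, this]

lemma no_return (F : CPLIFS m l) (hno : NoExactOverlap F.S) (k : Fin m) (j : Fin (l k))
    (v : List (Fin m)) : compFam F.f (v ++ [k]) (F.b k j) ≠ F.b k j := by
  intro hfix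
  rw [compFam_append] at hfix
  obtain ⟨p, hp⟩ := F.compFam_lift v (compFam F.f [k] (F.b k j))
  rw [hp] at hfix
  have e0 : compFam F.f [k] (F.b k j) = F.f k (F.b k j) := rfl
  set q₁ : List (Idx m l) := p ++ [⟨k, j.castSucc⟩] with hq₁
  set q₂ : List (Idx m l) := p ++ [⟨k, j.succ⟩] with hq₂
  have f1 : compFam F.S q₁ (F.b k j) = F.b k j := by
    rw [hq₁, compFam_append]
    rw [e0, F.eq_on_CP k _ (F.b_mem_castSucc k j)] at hfix
    exact hfix
  have f2 : compFam F.S q₂ (F.b k j) = F.b k j := by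
    rw [hq₂, compFam_append]
    rw [e0, F.eq_on_CP k _ (F.b_mem_succ k j)] at hfix
    exact hfix
  obtain ⟨A, B, hA⟩ := F.compFam_affine q₁
  obtain ⟨A', B', hA'⟩ := F.compFam_affine q₂
  have heq : compFam F.S (q₁ ++ q₂) = compFam F.S (q₂ ++ q₁) := by
    funext x
    rw [compFam_append F.S q₁ q₂, compFam_append F.S q₂ q₁, hA', hA, hA, hA']
    rw [hA] at f1
    rw [hA'] at f2
    linear_combination (A - 1) * f2 - (A' - 1) * f1
  have := F.noOverlap_list hno _ _ (by simp [hq₁]) (by simp [hq₁, hq₂]) heq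
  have h2 := (List.append_inj this (by simp [hq₁, hq₂])).1
  rw [hq₁, hq₂] at h2
  have h3 := List.append_cancel_left h2
  simp only [List.cons.injEq, and_true] at h3
  have h4 := eq_of_heq (Sigma.mk.inj h3).2
  have h5 := congrArg Fin.val h4
  simp at h5

lemma exists_r (F : CPLIFS m l) : ∃ r : ℝ, 0 ≤ r ∧ r < 1 ∧ ∀ k i, |F.ρ k i| ≤ r := by
  have h : ∀ᶠ r in nhdsWithin (1:ℝ) (Iio 1), ∀ k i, |F.ρ k i| ≤ r := by
    rw [Filter.eventually_all]; intro k
    rw [Filter.eventually_all]; intro i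
    filter_upwards [(eventually_gt_nhds (F.hρ1 k i)).filter_mono nhdsWithin_le_nhds] with r hr
      using hr.le
  have h0 : ∀ᶠ r in nhdsWithin (1:ℝ) (Iio 1), (0:ℝ) < r :=
    (eventually_gt_nhds one_pos).filter_mono nhdsWithin_le_nhds
  obtain ⟨r, h1, h2, h3⟩ := (h.and (h0.and self_mem_nhdsWithin)).exists
  exact ⟨r, h2.le, h3, h1⟩

lemma exists_a (F : CPLIFS m l) : ∃ a : ℝ, 0 < a ∧ a < 1 ∧
    ∀ k i, a * (l k + 1 : ℝ) ≤ Real.exp (-1) * |F.ρ k i| := by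
  have h : ∀ᶠ a in nhdsWithin (0:ℝ) (Ioi 0), ∀ k i, a * (l k + 1 : ℝ) ≤ Real.exp (-1) * |F.ρ k i| := by
    rw [Filter.eventually_all]; intro k
    rw [Filter.eventually_all]; intro i
    have hc : Tendsto (fun a : ℝ => a * (l k + 1 : ℝ)) (nhdsWithin 0 (Ioi 0)) (nhds (0 * (l k + 1 : ℝ))) :=
      ((continuous_id.mul continuous_const).tendsto 0).mono_left nhdsWithin_le_nhds
    rw [zero_mul] at hc
    have hp : 0 < Real.exp (-1) * |F.ρ k i| := mul_pos (Real.exp_pos _) (abs_pos.2 (F.hρ0 k i))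
    filter_upwards [hc.eventually (eventually_lt_nhds hp)] with a ha using ha.le
  have h0 : ∀ᶠ r in nhdsWithin (0:ℝ) (Ioi 0), r < (1:ℝ) :=
    (eventually_lt_nhds one_pos).filter_mono nhdsWithin_le_nhds
  obtain ⟨r, h1, h2, h3⟩ := (h.and (h0.and self_mem_nhdsWithin)).exists
  exact ⟨r, h3, h2, h1⟩

lemma f_mem_fix (F : CPLIFS m l) (k : Fin m) (x y : ℝ) (hx : F.f k x = x) (hy : F.f k y = y) :
    x = y := by
  obtain ⟨r, hr0, hr1, hr⟩ := F.exists_r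
  have := F.f_lip hr k x y
  rw [hx, hy] at this
  have h0 := abs_nonneg (x - y)
  have : |x - y| = 0 := by nlinarith
  linarith [abs_eq_zero.1 this]

lemma supp_Icc (F : CPLIFS m l) : ∃ α β : ℝ, α < β ∧ suppInt F.f = Icc α β := by
  classical
  unfold suppInt
  split_ifs with h
  · exact ⟨_, _, by linarith, rfl⟩
  · obtain ⟨r, hr0, hr1, hr⟩ := F.exists_r
    set 𝒥 := {J : Set ℝ | J.Nonempty ∧ (∃ a b : ℝ, J = Set.Icc a b) ∧ ∀ k, F.f k '' J ⊆ J} with h𝒥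
    have k0 : Fin m := ⟨0, by have := F.hm; omega⟩
    -- one invariant interval
    obtain ⟨R, hR0, hR⟩ : ∃ R : ℝ, 0 ≤ R ∧ ∀ k, |F.f k 0| ≤ R * (1 - r) := by
      have h1 : ∀ k, |F.f k 0| ≤ ∑ k, |F.f k 0| := fun k =>
        Finset.single_le_sum (f := fun k => |F.f k 0|) (fun i _ => abs_nonneg _) (Finset.mem_univ k)
      refine ⟨(∑ k, |F.f k 0|) / (1 - r), ?_, fun k => ?_⟩
      · exact div_nonneg (Finset.sum_nonneg fun i _ => abs_nonneg _) (by linarith)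
      · rw [div_mul_cancel₀ _ (by linarith)]; exact h1 k
    have hmem : Icc (-R) R ∈ 𝒥 := by
      refine ⟨⟨0, by simp [hR0]⟩, ⟨_, _, rfl⟩, ?_⟩
      rintro k _ ⟨x, hx, rfl⟩
      have hx' := abs_le.2 hx
      have h1 := F.f_lip hr k x 0
      rw [sub_zero] at h1
      have h2 := hR k
      have h3 : |F.f k x| ≤ |F.f k x - F.f k 0| + |F.f k 0| := by
        have := abs_add_le (F.f k x - F.f k 0) (F.f k 0); simpa using this
      exact abs_le.1 (by nlinarith)
    -- common point
    have hfix : ∀ J ∈ 𝒥, ∃ x ∈ J, F.f k0 x = x := by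
      rintro J ⟨⟨z, hz⟩, ⟨a, b, rfl⟩, hinv⟩
      have hab : a ≤ b := hz.1.trans hz.2
      have ha := hinv k0 (mem_image_of_mem _ (left_mem_Icc.2 hab))
      have hb := hinv k0 (mem_image_of_mem _ (right_mem_Icc.2 hab))
      have hc : ContinuousOn (fun x => x - F.f k0 x) (Icc a b) :=
        (continuous_id.sub (F.hcont k0)).continuousOn
      have := intermediate_value_Icc hab hc (show (0:ℝ) ∈ Icc _ _ from
        ⟨by linarith [ha.1], by linarith [hb.2]⟩)
      obtain ⟨x, hx, hx0⟩ := this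
      exact ⟨x, hx, by simp only at hx0; linarith⟩
    obtain ⟨x0, hx0, hx0f⟩ := hfix _ hmem
    have hx0mem : x0 ∈ ⋂₀ 𝒥 := by
      intro J hJ
      obtain ⟨x, hx, hxf⟩ := hfix J hJ
      rwa [F.f_mem_fix k0 x0 x hx0f hxf]
    have hcl : IsClosed (⋂₀ 𝒥) := isClosed_sInter (by rintro J ⟨_, ⟨a, b, rfl⟩, _⟩; exact isClosed_Icc)
    have hsub : ⋂₀ 𝒥 ⊆ Icc (-R) R := sInter_subset_of_mem hmem
    have hcpt : IsCompact (⋂₀ 𝒥) := isCompact_Icc.of_isClosed_subset hcl hsub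
    have hord : (⋂₀ 𝒥).OrdConnected := ordConnected_sInter
      (by rintro J ⟨_, ⟨a, b, rfl⟩, _⟩; exact ordConnected_Icc)
    have hI : ⋂₀ 𝒥 = Icc (sInf (⋂₀ 𝒥)) (sSup (⋂₀ 𝒥)) :=
      eq_Icc_of_connected_compact ⟨⟨x0, hx0mem⟩, hord.isPreconnected⟩ hcpt
    refine ⟨_, _, ?_, hI⟩
    by_contra hle
    push Not at hle
    have hsing : ∀ x ∈ ⋂₀ 𝒥, x = x0 := by
      intro x hx
      rw [hI] at hx hx0mem
      exact le_antisymm (by linarith [hx.1, hx.2, hx0mem.1, hx0mem.2])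
        (by linarith [hx.1, hx.2, hx0mem.1, hx0mem.2])
    exact h ⟨x0, fun k => hsing _ fun J hJ => hJ.2.2 k (mem_image_of_mem _ (hx0mem J hJ))⟩

lemma gap_count {α : Type*} (P : List α → Prop) [DecidablePred P] (cnt : List α → ℕ)
    (h0 : cnt [] = 0) (hs : ∀ k w, cnt (k :: w) = cnt w + if P (k :: w) then 1 else 0) (N : ℕ)
    (hgap : ∀ v u, v ≠ [] → P u → P (v ++ u) → N ≤ v.length) (w : List α) :
    cnt w * N ≤ w.length + N := by
  have key : ∀ w, cnt w = 0 ∨ ∃ v u, w = v ++ u ∧ P u ∧ cnt w * N ≤ u.length + N := by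
    intro w
    induction w with
    | nil => exact Or.inl h0
    | cons k w ih =>
      by_cases hP : P (k :: w)
      · right
        refine ⟨[], k :: w, rfl, hP, ?_⟩
        rw [hs, if_pos hP]
        rcases ih with h | ⟨v, u, rfl, hu, hle⟩
        · rw [h]; simp
        · have := hgap (k :: v) u (by simp) hu hP
          simp only [List.length_cons, List.length_append] at this ⊢
          rw [add_mul]; omega
      · rw [hs, if_neg hP, add_zero]
        rcases ih with h | ⟨v, u, rfl, hu, hle⟩
        · exact Or.inl h
        · exact Or.inr ⟨k :: v, u, rfl, hu, hle⟩
  rcases key w with h | ⟨v, u, rfl, _, hle⟩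
  · rw [h]; simp
  · simp only [List.length_append]; omega

lemma compFam_cont (F : CPLIFS m l) (w : List (Fin m)) : Continuous (compFam F.f w) := by
  induction w with
  | nil => exact continuous_id
  | cons k w ih => exact (F.hcont k).comp ih

lemma compFam_lip (F : CPLIFS m l) {r : ℝ} (hr0 : 0 ≤ r) (hr : ∀ k i, |F.ρ k i| ≤ r)
    (w : List (Fin m)) (x y : ℝ) :
    |compFam F.f w x - compFam F.f w y| ≤ r ^ w.length * |x - y| := by
  induction w with
  | nil => simp [compFam]
  | cons k w ih =>
    rw [compFam_cons, compFam_cons, List.length_cons, pow_succ']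
    calc _ ≤ r * |compFam F.f w x - compFam F.f w y| := F.f_lip hr k _ _
      _ ≤ _ := by rw [mul_assoc]; gcongr

lemma compFam_image_Icc (F : CPLIFS m l) (w : List (Fin m)) {α β : ℝ} (h : α ≤ β) :
    ∃ x y, x ≤ y ∧ compFam F.f w '' Icc α β = Icc x y := by
  have hc := isCompact_Icc.image (F.compFam_cont w) (X := ℝ) (s := Icc α β)
  have hn : (compFam F.f w '' Icc α β).Nonempty := (nonempty_Icc.2 h).image _
  have := eq_Icc_of_connected_compact
    ⟨hn, isPreconnected_Icc.image _ (F.compFam_cont w).continuousOn⟩ hc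
  refine ⟨_, _, ?_, this⟩
  rw [this] at hn
  exact nonempty_Icc.1 hn

lemma compFam_diff (F G : CPLIFS m l) {r δ : ℝ} (hr0 : 0 ≤ r) (hr1 : r < 1)
    (hr : ∀ k i, |F.ρ k i| ≤ r) (hFG : ∀ k x, |F.f k x - G.f k x| < δ)
    (w : List (Fin m)) (x y : ℝ) :
    |compFam F.f w x - compFam G.f w y| ≤ r ^ w.length * |x - y| + δ / (1 - r) := by
  induction w with
  | nil =>
    by_cases hm : Nonempty (Fin m)
    · obtain ⟨k⟩ := hm
      have hδ : 0 < δ := (abs_nonneg _).trans_lt (hFG k 0)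
      have : 0 ≤ δ / (1 - r) := div_nonneg hδ.le (by linarith)
      simpa [compFam] using this
    · exact absurd ⟨⟨0, by have := F.hm; omega⟩⟩ hm
  | cons k w ih =>
    rw [compFam_cons, compFam_cons, List.length_cons, pow_succ']
    have h1 := F.f_lip hr k (compFam F.f w x) (compFam G.f w y)
    have h2 := (hFG k (compFam G.f w y)).le
    have h3 := abs_sub_le (F.f k (compFam F.f w x)) (F.f k (compFam G.f w y)) (G.f k (compFam G.f w y))
    have h4 := mul_le_mul_of_nonneg_left ih hr0
    have h5 : r * (δ / (1 - r)) + δ = δ / (1 - r) := by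
      have : 1 - r ≠ 0 := by linarith
      field_simp; ring
    calc _ ≤ r * |compFam F.f w x - compFam G.f w y| + δ := by linarith
      _ ≤ r * (r ^ w.length * |x - y| + δ / (1 - r)) + δ := by linarith
      _ = _ := by linear_combination h5

end CPLIFS

open Classical in
/-- number of suffixes of a word satisfying a predicate -/
def sufCnt {α : Type*} (P : List α → Prop) : List α → ℕ
  | [] => 0
  | k :: w => sufCnt P w + if P (k :: w) then 1 else 0

lemma sufCnt_sum {α ι : Type*} [Fintype ι] (P : List α → Prop) (Q : ι → List α → Prop) (n0 : ℕ)
    (h : ∀ u, n0 < u.length → P u → ∃ q, Q q u) (w : List α) :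
    sufCnt P w ≤ n0 + ∑ q, sufCnt (Q q) w := by
  classical
  have key : sufCnt P w ≤ min n0 w.length + ∑ q, sufCnt (Q q) w := by
    induction w with
    | nil => simp [sufCnt]
    | cons k w ih =>
      simp only [sufCnt, Finset.sum_add_distrib, List.length_cons]
      by_cases hP : P (k :: w)
      · rw [if_pos hP]
        by_cases hn : n0 < (k :: w).length
        · obtain ⟨q, hq⟩ := h _ hn hP
          have h1 : 1 ≤ ∑ q, (if Q q (k :: w) then 1 else 0) := by
            have := Finset.single_le_sum (f := fun q => if Q q (k :: w) then 1 else 0)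
              (fun i _ => Nat.zero_le _) (Finset.mem_univ q)
            simpa [hq] using this
          have h2 : min n0 w.length ≤ min n0 (w.length + 1) := by omega
          omega
        · have h2 : min n0 w.length + 1 = min n0 (w.length + 1) := by
            simp only [List.length_cons] at hn; omega
          omega
      · rw [if_neg hP]
        have h2 : min n0 w.length ≤ min n0 (w.length + 1) := by omega
        omega
  have : min n0 w.length ≤ n0 := min_le_left _ _
  omega

namespace CPLIFS

variable {m : ℕ} {l : Fin m → ℕ}

lemma diam_image_le (F : CPLIFS m l) (k : Fin m) (A : Set ℝ) (hA : Bornology.IsBounded A) :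
    Metric.diam (F.f k '' A) ≤ Metric.diam A := by
  apply Metric.diam_le_of_forall_dist_le Metric.diam_nonneg
  rintro _ ⟨x, hx, rfl⟩ _ ⟨y, hy, rfl⟩
  have h1 := F.f_lip (fun k i => (F.hρ1 k i).le) k x y
  rw [one_mul] at h1
  exact h1.trans (Metric.dist_le_diam_of_mem hA hx hy)

lemma image_cons (F : CPLIFS m l) (k : Fin m) (w : List (Fin m)) (A : Set ℝ) :
    compFam F.f (k :: w) '' A = F.f k '' (compFam F.f w '' A) := by
  rw [Set.image_image]; rfl

/-- bad words -/
def BadW (F G : CPLIFS m l) (A B : Set ℝ) (u : List (Fin m)) : Prop :=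
  ∃ k w, u = k :: w ∧
    ¬ ∃ i, compFam F.f w '' A ⊆ F.CP k i ∧ compFam G.f w '' B ⊆ G.CP k i

lemma diam_cmp (F G : CPLIFS m l) {α β α' β' a δ : ℝ} (h : α < β) (h' : α' < β')
    (ha0 : 0 < a) (ha : ∀ k i, a * (l k + 1 : ℝ) ≤ |G.ρ k i|) (hδ : 0 ≤ δ)
    (hρ : ∀ k i, |F.ρ k i| ≤ Real.exp δ * |G.ρ k i|) (w : List (Fin m)) :
    Metric.diam (compFam F.f w '' Icc α β) * a ^ sufCnt (BadW F G (Icc α β) (Icc α' β')) w * (β' - α')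
      ≤ Real.exp (δ * w.length) * (β - α) * Metric.diam (compFam G.f w '' Icc α' β') := by
  classical
  induction w with
  | nil => simp [compFam, sufCnt, Real.diam_Icc h.le, Real.diam_Icc h'.le]
  | cons k w ih =>
    rw [image_cons, image_cons]
    obtain ⟨x, y, hxy, hF⟩ := F.compFam_image_Icc w h.le
    obtain ⟨x', y', hxy', hG⟩ := G.compFam_image_Icc w h'.le
    have e1 : (1:ℝ) ≤ Real.exp δ := Real.one_le_exp hδ
    have e2 : Real.exp (δ * ((k :: w).length : ℕ)) = Real.exp δ * Real.exp (δ * w.length) := by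
      rw [← Real.exp_add]; congr 1; push_cast [List.length_cons]; ring
    rw [e2]
    have hDF := Metric.diam_nonneg (s := compFam F.f w '' Icc α β)
    have hDG := Metric.diam_nonneg (s := compFam G.f w '' Icc α' β')
    set DF := Metric.diam (compFam F.f w '' Icc α β) with hDFd
    set DG := Metric.diam (compFam G.f w '' Icc α' β') with hDGd
    set E := Real.exp (δ * w.length) with hE
    have hE0 : 0 < E := Real.exp_pos _
    set cn := sufCnt (BadW F G (Icc α β) (Icc α' β')) w with hcn
    have hb : 0 < β - α := by linarith
    have hb' : 0 < β' - α' := by linarith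
    by_cases hB : BadW F G (Icc α β) (Icc α' β') (k :: w)
    · have hc : sufCnt (BadW F G (Icc α β) (Icc α' β')) (k :: w) = cn + 1 := by
        simp [sufCnt, hB, hcn]
      rw [hc, pow_succ]
      have h1 : Metric.diam (F.f k '' (compFam F.f w '' Icc α β)) ≤ DF :=
        F.diam_image_le k _ (by rw [hF]; exact Metric.isBounded_Icc _ _)
      have h2 : a * DG ≤ Metric.diam (G.f k '' (compFam G.f w '' Icc α' β')) :=
        G.diam_image_ge k (ha k) ha0.le _ ⟨x', y', hxy', hG⟩
      calc _ ≤ DF * (a ^ cn * a) * (β' - α') := by gcongr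
        _ = a * (DF * a ^ cn * (β' - α')) := by ring
        _ ≤ a * (E * (β - α) * DG) := by gcongr
        _ = 1 * E * (β - α) * (a * DG) := by ring
        _ ≤ _ := by gcongr
    · have hc : sufCnt (BadW F G (Icc α β) (Icc α' β')) (k :: w) = cn := by
        simp [sufCnt, hB, hcn]
      rw [hc]
      have hg : ∃ i, compFam F.f w '' Icc α β ⊆ F.CP k i ∧ compFam G.f w '' Icc α' β' ⊆ G.CP k i := by
        by_contra hcon
        exact hB ⟨k, w, rfl, hcon⟩
      obtain ⟨i, hi1, hi2⟩ := hg
      rw [F.diam_image_CP k i _ hi1, G.diam_image_CP k i _ hi2]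
      calc |F.ρ k i| * DF * a ^ cn * (β' - α') = |F.ρ k i| * (DF * a ^ cn * (β' - α')) := by ring
        _ ≤ (Real.exp δ * |G.ρ k i|) * (E * (β - α) * DG) := by
            gcongr
            exact hρ k i
        _ = _ := by ring

lemma diam_word_le (F : CPLIFS m l) {α β : ℝ} (h : α < β) (w : List (Fin m)) :
    Metric.diam (compFam F.f w '' Icc α β) ≤ β - α := by
  induction w with
  | nil => simp [compFam, Real.diam_Icc h.le]
  | cons k w ih =>
    obtain ⟨x, y, hxy, hF⟩ := F.compFam_image_Icc w h.le
    rw [image_cons]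
    exact (F.diam_image_le k _ (by rw [hF]; exact Metric.isBounded_Icc _ _)).trans ih

lemma diam_word_ge (F : CPLIFS m l) {α β a : ℝ} (h : α < β) (ha0 : 0 < a)
    (ha : ∀ k i, a * (l k + 1 : ℝ) ≤ |F.ρ k i|) (w : List (Fin m)) :
    a ^ w.length * (β - α) ≤ Metric.diam (compFam F.f w '' Icc α β) := by
  induction w with
  | nil => simp [compFam, Real.diam_Icc h.le]
  | cons k w ih =>
    rw [image_cons, List.length_cons, pow_succ']
    refine le_trans ?_ (F.diam_image_ge k (ha k) ha0.le _ (F.compFam_image_Icc w h.le))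
    rw [mul_assoc]; gcongr

lemma pressure_le (F G : CPLIFS m l) {s κ C : ℝ} (hs : 0 < s)
    (h : ∀ w, Metric.diam (compFam F.f w '' suppInt F.f) ≤
      Real.exp (C + κ * w.length) * Metric.diam (compFam G.f w '' suppInt G.f)) :
    pressure F.f s ≤ pressure G.f s + s * κ := by
  obtain ⟨α, β, hαβ, hI⟩ := F.supp_Icc
  obtain ⟨α', β', hαβ', hI'⟩ := G.supp_Icc
  obtain ⟨a, ha0, ha1, ha⟩ := F.exists_a
  obtain ⟨a', ha0', ha1', ha'⟩ := G.exists_a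
  have hexp : Real.exp (-1) ≤ 1 := by rw [Real.exp_le_one_iff]; norm_num
  have hF : ∀ w, a ^ w.length * (β - α) ≤ Metric.diam (compFam F.f w '' suppInt F.f) := by
    intro w
    rw [hI]
    exact F.diam_word_ge hαβ ha0 (fun k i => (ha k i).trans
      (mul_le_of_le_one_left (abs_nonneg _) hexp)) w
  have hG : ∀ w, a' ^ w.length * (β' - α') ≤ Metric.diam (compFam G.f w '' suppInt G.f) := by
    intro w
    rw [hI']
    exact G.diam_word_ge hαβ' ha0' (fun k i => (ha' k i).trans
      (mul_le_of_le_one_left (abs_nonneg _) hexp)) w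
  have hG2 : ∀ w, Metric.diam (compFam G.f w '' suppInt G.f) ≤ β' - α' := by
    intro w; rw [hI']; exact G.diam_word_le hαβ' w
  have hm : 0 < m := by have := F.hm; omega
  have hne : ∀ n, Nonempty (Fin n → Fin m) := fun n => ⟨fun _ => ⟨0, hm⟩⟩
  have hb : 0 < β - α := by linarith
  have hb' : 0 < β' - α' := by linarith
  set SF : ℕ → ℝ := fun n => ∑ w : Fin n → Fin m,
        Metric.diam (compFam F.f (List.ofFn w) '' suppInt F.f) ^ s with hSF
  set SG : ℕ → ℝ := fun n => ∑ w : Fin n → Fin m,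
        Metric.diam (compFam G.f (List.ofFn w) '' suppInt G.f) ^ s with hSG
  have hSFlow : ∀ n, (a ^ n * (β - α)) ^ s ≤ SF n := by
    intro n
    obtain ⟨w0⟩ := hne n
    refine le_trans ?_ (Finset.single_le_sum (f := fun w : Fin n → Fin m =>
      Metric.diam (compFam F.f (List.ofFn w) '' suppInt F.f) ^ s)
      (fun w _ => Real.rpow_nonneg Metric.diam_nonneg _) (Finset.mem_univ w0))
    have := hF (List.ofFn w0)
    rw [List.length_ofFn] at this
    exact Real.rpow_le_rpow (by positivity) this hs.le
  have hSGpos : ∀ n, 0 < SG n := by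
    intro n
    obtain ⟨w0⟩ := hne n
    refine Finset.sum_pos (fun w _ => Real.rpow_pos_of_pos ?_ _) ⟨w0, Finset.mem_univ _⟩
    exact lt_of_lt_of_le (by positivity) (hG (List.ofFn w))
  have hSFpos : ∀ n, 0 < SF n := fun n =>
    lt_of_lt_of_le (Real.rpow_pos_of_pos (by positivity) _) (hSFlow n)
  have hSGup : ∀ n, SG n ≤ (m : ℝ) ^ n * (β' - α') ^ s := by
    intro n
    calc SG n ≤ ∑ w : Fin n → Fin m, (β' - α') ^ s :=
          Finset.sum_le_sum fun w _ => Real.rpow_le_rpow Metric.diam_nonneg (hG2 _) hs.le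
      _ = _ := by simp
  have hcmp : ∀ n, SF n ≤ Real.exp (s * (C + κ * n)) * SG n := by
    intro n
    rw [hSF, hSG]
    simp only
    rw [Finset.mul_sum]
    refine Finset.sum_le_sum fun w _ => ?_
    have h1 := h (List.ofFn w)
    rw [List.length_ofFn] at h1
    refine (Real.rpow_le_rpow Metric.diam_nonneg h1 hs.le).trans_eq ?_
    rw [Real.mul_rpow (Real.exp_pos _).le Metric.diam_nonneg, ← Real.exp_mul]
    congr 2; ring
  have hlog : ∀ n, Real.log (SF n) ≤ s * (C + κ * n) + Real.log (SG n) := by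
    intro n
    have := Real.log_le_log (hSFpos n) (hcmp n)
    rwa [Real.log_mul (Real.exp_pos _).ne' (hSGpos n).ne', Real.log_exp] at this
  have hGbdd : IsBoundedUnder (· ≤ ·) atTop (fun n : ℕ => (n : ℝ)⁻¹ * Real.log (SG n)) := by
    refine ⟨Real.log m + |s * Real.log (β' - α')|, ?_⟩
    rw [eventually_map]
    filter_upwards [eventually_ge_atTop 1] with n hn
    have hn' : (1:ℝ) ≤ n := by exact_mod_cast hn
    have h1 := Real.log_le_log (hSGpos n) (hSGup n)
    have hmp : (0:ℝ) < m := by exact_mod_cast hm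
    rw [Real.log_mul (by positivity) (Real.rpow_pos_of_pos hb' _).ne', Real.log_pow,
      Real.log_rpow hb'] at h1
    rw [inv_mul_le_iff₀ (by linarith)]
    have h2 := le_abs_self (s * Real.log (β' - α'))
    have h3 := abs_nonneg (s * Real.log (β' - α'))
    nlinarith
  have hFbdd : IsBoundedUnder (· ≥ ·) atTop (fun n : ℕ => (n : ℝ)⁻¹ * Real.log (SF n)) := by
    refine ⟨s * Real.log a - |s * Real.log (β - α)|, ?_⟩
    rw [eventually_map]
    filter_upwards [eventually_ge_atTop 1] with n hn
    have hn' : (1:ℝ) ≤ n := by exact_mod_cast hn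
    have h1 := Real.log_le_log (Real.rpow_pos_of_pos (by positivity) _) (hSFlow n)
    rw [Real.log_rpow (by positivity), Real.log_mul (by positivity) hb.ne', Real.log_pow] at h1
    rw [ge_iff_le, le_inv_mul_iff₀ (by linarith)]
    have h2 := neg_abs_le (s * Real.log (β - α))
    have h3 := abs_nonneg (s * Real.log (β - α))
    nlinarith
  change limsup (fun n : ℕ => (n : ℝ)⁻¹ * Real.log (SF n)) atTop ≤
    limsup (fun n : ℕ => (n : ℝ)⁻¹ * Real.log (SG n)) atTop + s * κ
  apply le_of_forall_pos_le_add
  intro t ht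
  refine limsup_le_of_le hFbdd.isCoboundedUnder_le ?_
  have hev := eventually_lt_of_limsup_lt (lt_add_of_pos_right
    (limsup (fun n : ℕ => (n : ℝ)⁻¹ * Real.log (SG n)) atTop) (half_pos ht)) hGbdd
  have hC : Tendsto (fun n : ℕ => (s * C) / (n : ℝ)) atTop (nhds 0) :=
    tendsto_const_div_atTop_nhds_zero_nat _
  filter_upwards [hev, hC.eventually (eventually_lt_nhds (half_pos ht)), eventually_ge_atTop 1]
    with n h1 h2 hn
  have hn' : (1:ℝ) ≤ n := by exact_mod_cast hn
  have h3 := mul_le_mul_of_nonneg_left (hlog n) (inv_nonneg.2 (by linarith : (0:ℝ) ≤ n))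
  have h4 : (n:ℝ)⁻¹ * (s * (C + κ * n) + Real.log (SG n)) =
      s * C / n + s * κ + (n:ℝ)⁻¹ * Real.log (SG n) := by
    field_simp
  linarith

end CPLIFS

/-- **Theorem pm80.** Let `F` be a CPLIFS with attractor `Λ` whose generated
self-similar IFS has no exact overlapping, and let `s ∈ (0, dim_H Λ)`.  Then for every
`ε > 0` there is `δ > 0` such that every CPLIFS `G` that is δ-close to `F` satisfies
`Φ(s) - ε < Φ̂(s)`, where `Φ, Φ̂` are the natural pressure functions of `F` and `G`. -/
theorem pressure_lower_semicontinuous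
    {m : ℕ} {l : Fin m → ℕ} (F : CPLIFS m l)
    (Λ : Set ℝ) (hΛne : Λ.Nonempty) (hΛc : IsCompact Λ)
    (hΛinv : Λ = ⋃ k, F.f k '' Λ)
    (hno : NoExactOverlap F.S)
    (s : ℝ) (hs0 : 0 < s) (hs1 : ENNReal.ofReal s < dimH Λ)
    (ε : ℝ) (hε : 0 < ε) :
    ∃ δ > (0 : ℝ), ∀ G : CPLIFS m l, CPLIFS.Close δ F G →
      pressure F.f s - ε < pressure G.f s := by
  classical
  obtain ⟨r, hr0, hr1, hr⟩ := F.exists_r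
  obtain ⟨a, ha0, ha1, ha⟩ := F.exists_a
  obtain ⟨α, β, hαβ, hI⟩ := F.supp_Icc
  have hla : 0 < -Real.log a := by linarith [Real.log_neg ha0 ha1]
  set L : ℕ := Fintype.card (Σ k : Fin m, Fin (l k)) with hL
  -- choice of N
  obtain ⟨N, hN, hN1⟩ : ∃ N : ℕ, s * ((L / N : ℝ) * -Real.log a) < ε / 4 ∧ 1 ≤ N := by
    have hT : Tendsto (fun N : ℕ => s * ((L / N : ℝ) * -Real.log a)) atTop (nhds (s * (0 * -Real.log a))) :=
      ((tendsto_const_div_atTop_nhds_zero_nat (L : ℝ)).mul_const _).const_mul _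
    rw [zero_mul, mul_zero] at hT
    exact ((hT.eventually (eventually_lt_nhds (by linarith : 0 < ε / 4))).and
      (eventually_ge_atTop 1)).exists
  have hN0 : (0:ℝ) < N := by exact_mod_cast hN1
  -- choice of c
  obtain ⟨c, hc, hc0⟩ : ∃ c : ℝ, (∀ v ∈ {v : List (Fin m) | v.length ≤ N}, ∀ k, ∀ j : Fin (l k),
      2 * c < |compFam F.f (v ++ [k]) (F.b k j) - F.b k j|) ∧ 0 < c := by
    have h1 : ∀ᶠ c in nhdsWithin (0:ℝ) (Ioi 0), ∀ v ∈ {v : List (Fin m) | v.length ≤ N},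
        ∀ k, ∀ j : Fin (l k), 2 * c < |compFam F.f (v ++ [k]) (F.b k j) - F.b k j| := by
      rw [Filter.eventually_all_finite (List.finite_length_le (Fin m) N)]
      intro v _
      rw [Filter.eventually_all]; intro k
      rw [Filter.eventually_all]; intro j
      have hp : 0 < |compFam F.f (v ++ [k]) (F.b k j) - F.b k j| / 2 :=
        half_pos (abs_pos.2 (sub_ne_zero.2 (F.no_return hno k j v)))
      filter_upwards [(eventually_lt_nhds hp).filter_mono nhdsWithin_le_nhds] with c hc
      linarith
    exact (h1.and self_mem_nhdsWithin).exists
  -- choice of e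
  obtain ⟨e, ⟨hsep, hec⟩, he0⟩ : ∃ e : ℝ, ((∀ k, ∀ j j' : Fin (l k), j < j' →
      2 * e ≤ F.b k j' - F.b k j) ∧ e < c / 2) ∧ 0 < e := by
    have h1 : ∀ᶠ e in nhdsWithin (0:ℝ) (Ioi 0), ∀ k, ∀ j j' : Fin (l k), j < j' →
      2 * e ≤ F.b k j' - F.b k j := by
      rw [Filter.eventually_all]; intro k
      rw [Filter.eventually_all]; intro j
      rw [Filter.eventually_all]; intro j'
      by_cases hjj : j < j'
      · have hp : 0 < (F.b k j' - F.b k j) / 2 := half_pos (sub_pos.2 (F.hb k hjj))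
        filter_upwards [(eventually_lt_nhds hp).filter_mono nhdsWithin_le_nhds] with c hc _
        linarith
      · exact Filter.Eventually.of_forall fun _ h => absurd h hjj
    have h2 : ∀ᶠ e in nhdsWithin (0:ℝ) (Ioi 0), e < c / 2 :=
      (eventually_lt_nhds (half_pos hc0)).filter_mono nhdsWithin_le_nhds
    exact ((h1.and h2).and self_mem_nhdsWithin).exists
  -- choice of δ
  obtain ⟨δ, ⟨hδ1, hδ2, hδ3, hδ4⟩, hδ0⟩ : ∃ δ : ℝ, ((∀ k, ∀ j : Fin (l k),
      4 * δ ≤ e * |F.ρ k j.castSucc - F.ρ k j.succ|) ∧ δ < c / 8 * (1 - r) ∧ δ < 1 ∧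
      δ < ε / 4 / s) ∧ 0 < δ := by
    have h1 : ∀ᶠ δ in nhdsWithin (0:ℝ) (Ioi 0), ∀ k, ∀ j : Fin (l k),
      4 * δ ≤ e * |F.ρ k j.castSucc - F.ρ k j.succ| := by
      rw [Filter.eventually_all]; intro k
      rw [Filter.eventually_all]; intro j
      have hp : 0 < e * |F.ρ k j.castSucc - F.ρ k j.succ| / 4 := by
        have := abs_pos.2 (sub_ne_zero.2 (F.hconsec k j))
        positivity
      filter_upwards [(eventually_lt_nhds hp).filter_mono nhdsWithin_le_nhds] with c hc
      linarith
    have hlt : ∀ z : ℝ, 0 < z → ∀ᶠ δ in nhdsWithin (0:ℝ) (Ioi 0), δ < z := fun z hz =>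
      (eventually_lt_nhds hz).filter_mono nhdsWithin_le_nhds
    have h2 := hlt (c / 8 * (1 - r)) (mul_pos (by linarith) (by linarith))
    have h3 := hlt 1 one_pos
    have h4 := hlt (ε / 4 / s) (by positivity)
    exact ((h1.and (h2.and (h3.and h4))).and self_mem_nhdsWithin).exists
  refine ⟨δ, hδ0, ?_⟩
  rintro G ⟨-, hlogρ, hFG⟩
  obtain ⟨α', β', hαβ', hI'⟩ := G.supp_Icc
  have hδr : δ / (1 - r) < c / 8 := by rw [div_lt_iff₀ (by linarith)]; exact hδ2
  have hbreak : ∀ k j, |F.b k j - G.b k j| < e := fun k j =>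
    F.kink G he0 k (hsep k) (hδ1 k) (hFG k) j
  have hρ : ∀ k i, |F.ρ k i| ≤ Real.exp δ * |G.ρ k i| := by
    intro k i
    have h1 := (abs_lt.1 (hlogρ k i)).2
    have p1 := abs_pos.2 (F.hρ0 k i)
    have p2 := abs_pos.2 (G.hρ0 k i)
    rw [← Real.log_le_log_iff p1 (by positivity), Real.log_mul (Real.exp_pos _).ne' p2.ne',
      Real.log_exp]
    linarith
  have haG : ∀ k i, a * (l k + 1 : ℝ) ≤ |G.ρ k i| := by
    intro k i
    refine (ha k i).trans ?_
    have h1 := hρ k i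
    have h2 : Real.exp δ ≤ Real.exp 1 := Real.exp_le_exp.2 hδ3.le
    rw [Real.exp_neg, inv_mul_le_iff₀ (Real.exp_pos _)]
    exact h1.trans (by gcongr)
  -- choice of n0
  set M : ℝ := (β - α) + (|α - α'| + (β' - α')) with hM
  obtain ⟨n0, hn0⟩ : ∃ n0 : ℕ, ∀ n ≥ n0, r ^ n * M ≤ c / 8 := by
    have hT : Tendsto (fun n : ℕ => r ^ n * M) atTop (nhds (0 * M)) :=
      (tendsto_pow_atTop_nhds_zero_of_lt_one hr0 hr1).mul_const M
    rw [zero_mul] at hT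
    have h1 := hT.eventually (eventually_lt_nhds (by linarith : 0 < c / 8))
    obtain ⟨n0, h⟩ := eventually_atTop.1 h1
    exact ⟨n0, fun n hn => (h n hn).le⟩
  set Q : (Σ k : Fin m, Fin (l k)) → List (Fin m) → Prop := fun q u =>
    ∃ w, u = q.1 :: w ∧ |compFam F.f w α - F.b q.1 q.2| ≤ c with hQ
  have hbad : ∀ u, n0 < u.length → CPLIFS.BadW F G (Icc α β) (Icc α' β') u → ∃ q, Q q u := by
    rintro _ hlen ⟨k, w, rfl, hnot⟩
    by_contra hcon
    push Not at hcon
    have hfar : ∀ j, c < |compFam F.f w α - F.b k j| := by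
      intro j
      by_contra hle
      push Not at hle
      exact hcon ⟨k, j⟩ ⟨w, rfl, hle⟩
    have hlen' : n0 ≤ w.length := by simp only [List.length_cons] at hlen; omega
    have hrM := hn0 _ hlen'
    have hrp : 0 ≤ r ^ w.length := pow_nonneg hr0 _
    set x := compFam F.f w α with hx
    obtain ⟨i, hi1, hi2⟩ := aux_exists_piece (F.b k) (F.hb k) x
    have hclF : ∀ z, |x - z| ≤ c / 2 → z ∈ F.CP k i := by
      intro z hz
      rw [abs_le] at hz
      refine ⟨fun j hj => ?_, fun j hj => ?_⟩
      · have h1 := hi1 j hj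
        have h2 := hfar j
        rw [abs_of_nonneg (by linarith)] at h2
        linarith
      · have h1 := hi2 j hj
        have h2 := hfar j
        rw [abs_of_nonpos (by linarith)] at h2
        linarith
    have hclG : ∀ z, |x - z| ≤ c / 2 → z ∈ G.CP k i := by
      intro z hz
      rw [abs_le] at hz
      refine ⟨fun j hj => ?_, fun j hj => ?_⟩
      · have h1 := hi1 j hj
        have h2 := hfar j
        have h3 := abs_lt.1 (hbreak k j)
        rw [abs_of_nonneg (by linarith)] at h2
        linarith
      · have h1 := hi2 j hj
        have h2 := hfar j
        have h3 := abs_lt.1 (hbreak k j)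
        rw [abs_of_nonpos (by linarith)] at h2
        linarith
    refine hnot ⟨i, ?_, ?_⟩
    · rintro _ ⟨y, hy, rfl⟩
      apply hclF
      have h1 := F.compFam_lip hr0 hr w α y
      have h2 : |α - y| ≤ M := by
        have := abs_nonneg (α - α')
        rw [abs_le]; constructor <;> linarith [hy.1, hy.2]
      have h3 := mul_le_mul_of_nonneg_left h2 hrp
      linarith
    · rintro _ ⟨y, hy, rfl⟩
      apply hclG
      have h1 := F.compFam_diff G hr0 hr1 hr hFG w α y
      have h2 : |α - y| ≤ M := by
        have h5 := abs_sub_le α α' y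
        have h6 : |α' - y| ≤ β' - α' := by rw [abs_le]; constructor <;> linarith [hy.1, hy.2]
        linarith
      have h3 := mul_le_mul_of_nonneg_left h2 hrp
      linarith
  have hgap : ∀ q, ∀ v u, v ≠ [] → Q q u → Q q (v ++ u) → N ≤ v.length := by
    rintro ⟨k, j⟩ v u hv ⟨w, rfl, hw⟩ ⟨w', hw', hw2⟩
    by_contra hlt
    push Not at hlt
    obtain ⟨k', v', rfl⟩ := List.exists_cons_of_ne_nil hv
    simp only [List.cons_append, List.cons.injEq] at hw'
    obtain ⟨rfl, rfl⟩ := hw'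
    simp only at hw hw2
    have e1 : compFam F.f (v' ++ k' :: w) α = compFam F.f (v' ++ [k']) (compFam F.f w α) := by
      rw [← CPLIFS.compFam_append]; simp
    rw [e1] at hw2
    have h1 := F.compFam_lip zero_le_one (fun k i => (F.hρ1 k i).le) (v' ++ [k'])
      (F.b k' j) (compFam F.f w α)
    rw [one_pow, one_mul, abs_sub_comm (F.b k' j)] at h1
    have h2 := hc v' (by simp only [List.length_cons] at hlt; simp only [mem_setOf_eq]; omega) k' j
    have h3 := abs_sub_le (compFam F.f (v' ++ [k']) (F.b k' j))
      (compFam F.f (v' ++ [k']) (compFam F.f w α)) (F.b k' j)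
    linarith
  have hcount : ∀ w, (sufCnt (CPLIFS.BadW F G (Icc α β) (Icc α' β')) w : ℝ) ≤
      (n0 + L) + (L / N : ℝ) * w.length := by
    intro w
    have h1 := sufCnt_sum _ Q n0 hbad w
    have h2 : ∀ q, sufCnt (Q q) w * N ≤ w.length + N := fun q =>
      CPLIFS.gap_count (Q q) (sufCnt (Q q)) rfl
        (fun k w => by simp only [sufCnt]) N (hgap q) w
    have h3 : (∑ q, sufCnt (Q q) w) * N ≤ L * (w.length + N) := by
      rw [Finset.sum_mul]
      refine (Finset.sum_le_sum fun q _ => h2 q).trans ?_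
      rw [Finset.sum_const, Finset.card_univ, smul_eq_mul]
    have h1' : (sufCnt (CPLIFS.BadW F G (Icc α β) (Icc α' β')) w : ℝ) ≤
      n0 + ((∑ q, sufCnt (Q q) w : ℕ) : ℝ) := by exact_mod_cast h1
    have h3' : ((∑ q, sufCnt (Q q) w : ℕ) : ℝ) * N ≤ L * (w.length + N) := by exact_mod_cast h3
    rw [← le_div_iff₀ hN0] at h3'
    have h4 : (L * (w.length + N) / N : ℝ) = L + (L / N : ℝ) * w.length := by
      field_simp; ring
    linarith
  set κ : ℝ := δ + (L / N : ℝ) * -Real.log a with hκ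
  set C : ℝ := Real.log ((β - α) / (β' - α')) + (n0 + L) * -Real.log a with hC
  have hb : 0 < β - α := by linarith
  have hb' : 0 < β' - α' := by linarith
  have hmain : ∀ w, Metric.diam (compFam F.f w '' suppInt F.f) ≤
      Real.exp (C + κ * w.length) * Metric.diam (compFam G.f w '' suppInt G.f) := by
    intro w
    rw [hI, hI']
    have h1 := F.diam_cmp G hαβ hαβ' ha0 haG hδ0.le hρ w
    set cn := sufCnt (CPLIFS.BadW F G (Icc α β) (Icc α' β')) w with hcn
    have h2 : a ^ cn = Real.exp (Real.log a * cn) := by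
      rw [← Real.rpow_natCast, Real.rpow_def_of_pos ha0]
    have h3 : Real.exp (-(((n0 + L) + (L / N : ℝ) * w.length) * -Real.log a)) ≤ a ^ cn := by
      rw [h2]
      apply Real.exp_le_exp.2
      have := mul_le_mul_of_nonneg_right (hcount w) hla.le
      linarith
    set T := ((n0 + L) + (L / N : ℝ) * w.length) * -Real.log a with hT
    have h4 : Real.exp (C + κ * w.length) =
        (β - α) / (β' - α') * Real.exp (δ * w.length) * Real.exp T := by
      have : C + κ * w.length = Real.log ((β - α) / (β' - α')) + δ * w.length + T := by
        rw [hC, hκ, hT]; ring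
      rw [this, Real.exp_add, Real.exp_add, Real.exp_log (by positivity)]
    have hDF := Metric.diam_nonneg (s := compFam F.f w '' Icc α β)
    set DF := Metric.diam (compFam F.f w '' Icc α β)
    set DG := Metric.diam (compFam G.f w '' Icc α' β')
    have h5 : DF * Real.exp (-T) * (β' - α') ≤ Real.exp (δ * w.length) * (β - α) * DG :=
      le_trans (by gcongr) h1
    have h6 : DF = (DF * Real.exp (-T) * (β' - α')) * (Real.exp T / (β' - α')) := by
      rw [Real.exp_neg]
      have := (Real.exp_pos T).ne'
      field_simp
    rw [h4]
    calc DF = (DF * Real.exp (-T) * (β' - α')) * (Real.exp T / (β' - α')) := h6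
      _ ≤ (Real.exp (δ * w.length) * (β - α) * DG) * (Real.exp T / (β' - α')) := by gcongr
      _ = _ := by ring
  have hfin := F.pressure_le G hs0 hmain
  have hsδ : s * δ < ε / 4 := by rw [lt_div_iff₀ hs0] at hδ4; linarith
  have : s * κ = s * δ + s * ((L / N : ℝ) * -Real.log a) := by rw [hκ]; ring
  linarith

end
end

section
/- Let F be a CPLIFS with attractor Λ whose generated self-similar IFS has no exact overlapping, and let s ∈ (0, dim_H Λ), where dim_H denotes Hausdorff dimension. Then for every ε > 0 there exists δ > 0 such that every CPLIFS F̂ that is δ-close to F satisfies Φ̂(s) < Φ(s) + ε, where Φ and Φ̂ are the natural pressure functions of F and F̂. -/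
open Set Filter MeasureTheory

noncomputable section

section helpers

open Topology

theorem h_finmin {ι : Type*} [Finite ι] (c : ι → ℝ) (h : ∀ i, 0 < c i) :
    ∃ d > (0:ℝ), ∀ i, d ≤ c i := by
  rcases isEmpty_or_nonempty ι with hι | hι
  · exact ⟨1, one_pos, fun i => (hι.false i).elim⟩
  · obtain ⟨i, hi⟩ := Finite.exists_min c
    exact ⟨c i, h i, hi⟩

theorem h_compFam_cons {ι : Type*} (S : ι → ℝ → ℝ) (k : ι) (v : List ι) :
    compFam S (k :: v) = S k ∘ compFam S v := rfl

theorem h_compFam_nil {ι : Type*} (S : ι → ℝ → ℝ) :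
    compFam S [] = id := rfl

theorem h_compFam_append {ι : Type*} (S : ι → ℝ → ℝ) (u v : List ι) :
    compFam S (u ++ v) = compFam S u ∘ compFam S v := by
  induction u with
  | nil => rfl
  | cons k u ih => simp only [List.cons_append, h_compFam_cons, ih]; rfl

theorem h_ex_idx {l : ℕ} (b : Fin l → ℝ) (hb : StrictMono b) (x : ℝ) :
    ∃ i : Fin (l + 1), ∀ j : Fin l, (j : ℕ) < (i : ℕ) ↔ b j ≤ x := by
  classical
  have hex : ∃ n : ℕ, ∀ j : Fin l, n ≤ (j : ℕ) → x < b j :=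
    ⟨l, fun j hj => absurd j.2 (by omega)⟩
  have hle : Nat.find hex ≤ l := Nat.find_min' hex (fun j hj => absurd j.2 (by omega))
  refine ⟨⟨Nat.find hex, by omega⟩, fun j => ⟨fun h => ?_, fun h => ?_⟩⟩
  · have := Nat.find_min hex h
    push Not at this
    obtain ⟨j', h1, h2⟩ := this
    exact (hb.monotone (Fin.le_def.2 h1)).trans h2
  · by_contra hc
    exact absurd (Nat.find_spec hex j (not_lt.1 hc)) (not_lt.2 h)

variable {m : ℕ} {l : Fin m → ℕ}

theorem h_right (F : CPLIFS m l) (k : Fin m) (x : ℝ) (i : Fin (l k + 1))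
    (hi : ∀ j : Fin (l k), (j : ℕ) < (i : ℕ) ↔ F.b k j ≤ x) :
    F.f k x = F.ρ k i * x + F.t k i ∧ ∀ᶠ y in 𝓝[>] x, F.f k y = F.ρ k i * y + F.t k i := by
  have ev : ∀ᶠ y in 𝓝[>] x, F.f k y = F.ρ k i * y + F.t k i := by
    have h1 : ∀ᶠ y in 𝓝[>] x, ∀ j : Fin (l k), (i : ℕ) ≤ j → y < F.b k j := by
      rw [eventually_all]
      intro j
      by_cases hj : (i : ℕ) ≤ j
      · have : x < F.b k j := by
          by_contra hc
          have := (hi j).2 (not_lt.1 hc)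
          omega
        filter_upwards [nhdsWithin_le_nhds (Iio_mem_nhds this)] with y hy _ using hy
      · exact Eventually.of_forall fun y h => absurd h hj
    filter_upwards [h1, self_mem_nhdsWithin] with y hy hy2
    exact F.haff k i y (fun j hj => lt_of_le_of_lt ((hi j).1 hj) hy2) hy
  refine ⟨?_, ev⟩
  have t1 : Tendsto (F.f k) (𝓝[>] x) (𝓝 (F.f k x)) :=
    (F.hcont k).continuousAt.tendsto.mono_left nhdsWithin_le_nhds
  have t2 : Tendsto (fun y => F.ρ k i * y + F.t k i) (𝓝[>] x) (𝓝 (F.ρ k i * x + F.t k i)) :=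
    (Continuous.tendsto (by fun_prop) x).mono_left nhdsWithin_le_nhds
  exact tendsto_nhds_unique t1 (t2.congr' (ev.mono fun y hy => hy.symm))

theorem h_left (F : CPLIFS m l) (k : Fin m) (j : Fin (l k)) :
    F.f k (F.b k j) = F.ρ k j.castSucc * F.b k j + F.t k j.castSucc := by
  have ev : ∀ᶠ y in 𝓝[<] (F.b k j), F.f k y = F.ρ k j.castSucc * y + F.t k j.castSucc := by
    have h1 : ∀ᶠ y in 𝓝[<] (F.b k j), ∀ j' : Fin (l k), (j' : ℕ) < j → F.b k j' < y := by
      rw [eventually_all]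
      intro j'
      by_cases hj : (j' : ℕ) < j
      · have : F.b k j' < F.b k j := F.hb k (Fin.lt_def.2 hj)
        filter_upwards [nhdsWithin_le_nhds (Ioi_mem_nhds this)] with y hy _ using hy
      · exact Eventually.of_forall fun y h => absurd h hj
    filter_upwards [h1, self_mem_nhdsWithin] with y hy hy2
    refine F.haff k _ y (fun j' hj => hy j' (by simpa using hj)) (fun j' hj => ?_)
    exact lt_of_lt_of_le hy2 ((F.hb k).monotone (Fin.le_def.2 (by simpa using hj)))
  have t1 : Tendsto (F.f k) (𝓝[<] (F.b k j)) (𝓝 (F.f k (F.b k j))) :=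
    (F.hcont k).continuousAt.tendsto.mono_left nhdsWithin_le_nhds
  have t2 : Tendsto (fun y => F.ρ k j.castSucc * y + F.t k j.castSucc) (𝓝[<] (F.b k j))
      (𝓝 (F.ρ k j.castSucc * F.b k j + F.t k j.castSucc)) :=
    (Continuous.tendsto (by fun_prop) _).mono_left nhdsWithin_le_nhds
  exact tendsto_nhds_unique t1 (t2.congr' (ev.mono fun y hy => hy.symm))

theorem h_right_b (F : CPLIFS m l) (k : Fin m) (j : Fin (l k)) :
    F.f k (F.b k j) = F.ρ k j.succ * F.b k j + F.t k j.succ := by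
  refine (h_right F k _ j.succ fun j' => ?_).1
  rw [(F.hb k).le_iff_le, Fin.le_def, Fin.val_succ]
  omega

theorem h_lip (F : CPLIFS m l) : ∃ K : ℝ, 0 < K ∧ K < 1 ∧
    ∀ k x y, |F.f k x - F.f k y| ≤ K * |x - y| := by
  have hm := F.hm
  obtain ⟨d, hd, hd2⟩ := h_finmin (fun p : CPLIFS.Idx m l => 1 - |F.ρ p.1 p.2|)
    (fun p => by have := F.hρ1 p.1 p.2; linarith)
  have hK : ∀ k i, |F.ρ k i| ≤ 1 - d := fun k i => by have := hd2 ⟨k, i⟩; dsimp at this; linarith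
  have h0 : 0 < 1 - d := by
    have := hK ⟨0, by omega⟩ 0
    have h2 := abs_pos.2 (F.hρ0 ⟨0, by omega⟩ 0)
    linarith
  refine ⟨1 - d, h0, by linarith, ?_⟩
  have key : ∀ k x y, x ≤ y → |F.f k y - F.f k x| ≤ (1 - d) * |y - x| := by
    intro k x y hxy
    choose i hi using fun z => h_ex_idx (F.b k) (F.hb k) z
    have := norm_image_sub_le_of_norm_deriv_right_le_segment (f := F.f k) (a := x) (b := y)
      (f' := fun z => F.ρ k (i z)) (C := 1 - d) (F.hcont k).continuousOn ?_ ?_ y ⟨hxy, le_rfl⟩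
    · rw [Real.norm_eq_abs] at this
      rwa [abs_of_nonneg (sub_nonneg.2 hxy)]
    · intro z hz
      have h := h_right F k z (i z) (hi z)
      rw [← hasDerivWithinAt_Ioi_iff_Ici]
      have hd : HasDerivWithinAt (fun y => F.ρ k (i z) * y + F.t k (i z)) (F.ρ k (i z)) (Ioi z) z := by
        have := (((hasDerivAt_id z).const_mul (F.ρ k (i z))).add_const (F.t k (i z))).hasDerivWithinAt (s := Ioi z)
        simpa using this
      exact hd.congr_of_eventuallyEq h.2 h.1
    · intro z _
      exact hK k _
  intro k x y
  rcases le_total x y with h | h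
  · rw [abs_sub_comm, abs_sub_comm x]; exact key k x y h
  · exact key k y x h

theorem h_diam_le (f : ℝ → ℝ) (T : Set ℝ) (K : ℝ) (hK : 0 ≤ K) (hT : Bornology.IsBounded T)
    (h : ∀ x ∈ T, ∀ y ∈ T, |f x - f y| ≤ K * |x - y|) :
    Metric.diam (f '' T) ≤ K * Metric.diam T := by
  apply Metric.diam_le_of_forall_dist_le (mul_nonneg hK Metric.diam_nonneg)
  rintro _ ⟨x, hx, rfl⟩ _ ⟨y, hy, rfl⟩
  rw [Real.dist_eq]
  refine (h x hx y hy).trans (mul_le_mul_of_nonneg_left ?_ hK)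
  rw [← Real.dist_eq]
  exact Metric.dist_le_diam_of_mem hT hx hy

theorem h_diam_ge (f : ℝ → ℝ) (T : Set ℝ) (K : ℝ) (hK : 0 < K)
    (hT : Bornology.IsBounded (f '' T))
    (h : ∀ x ∈ T, ∀ y ∈ T, K * |x - y| ≤ |f x - f y|) :
    K * Metric.diam T ≤ Metric.diam (f '' T) := by
  rw [mul_comm, ← le_div_iff₀ hK]
  apply Metric.diam_le_of_forall_dist_le (div_nonneg Metric.diam_nonneg hK.le)
  intro x hx y hy
  rw [le_div_iff₀ hK, mul_comm, Real.dist_eq]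
  refine (h x hx y hy).trans ?_
  rw [← Real.dist_eq]
  exact Metric.dist_le_diam_of_mem hT (mem_image_of_mem _ hx) (mem_image_of_mem _ hy)

/-- lower bound for the diameter of images -/
theorem h_lower (F : CPLIFS m l) : ∃ c : ℝ, 0 < c ∧ c ≤ 1 ∧
    ∀ k, ∀ T : Set ℝ, IsConnected T → IsCompact T →
      c * Metric.diam T ≤ Metric.diam (F.f k '' T) := by
  obtain ⟨d, hd, hd2⟩ := h_finmin (fun p : CPLIFS.Idx m l => |F.ρ p.1 p.2|)
    (fun p => abs_pos.2 (F.hρ0 p.1 p.2))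
  obtain ⟨e, he, he2⟩ := h_finmin (fun k : Fin m => d / ((l k : ℝ) + 1)) (fun k => by positivity)
  refine ⟨min e 1, by positivity, min_le_right _ _, ?_⟩
  intro k T hT hTc
  have hbd : Bornology.IsBounded (F.f k '' T) := (hTc.image (F.hcont k)).isBounded
  have hpiece : ∀ i, d * Metric.diam (T ∩ F.J k i) ≤ Metric.diam (F.f k '' T) := by
    intro i
    refine (h_diam_ge (F.f k) _ d hd (hbd.subset (image_mono inter_subset_left)) ?_).trans
      (Metric.diam_mono (image_mono inter_subset_left) hbd)
    rintro x ⟨_, hx⟩ y ⟨_, hy⟩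
    rw [F.haff k i x hx.1 hx.2, F.haff k i y hy.1 hy.2]
    rw [show F.ρ k i * x + F.t k i - (F.ρ k i * y + F.t k i) = F.ρ k i * (x - y) by ring, abs_mul]
    exact mul_le_mul_of_nonneg_right (hd2 ⟨k, i⟩) (abs_nonneg _)
  have hcov : T ⊆ (⋃ i, T ∩ F.J k i) ∪ range (F.b k) := by
    intro x hx
    by_cases hxb : x ∈ range (F.b k)
    · exact Or.inr hxb
    · left
      obtain ⟨i, hi⟩ := h_ex_idx (F.b k) (F.hb k) x
      refine mem_iUnion.2 ⟨i, hx, fun j hj => lt_of_le_of_ne ((hi j).1 hj) fun h => hxb ⟨j, h⟩, ?_⟩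
      intro j hj
      by_contra hc
      have := (hi j).2 (not_lt.1 hc)
      omega
  have hvol : volume T ≤ ∑ i : Fin (l k + 1), ENNReal.ofReal (Metric.diam (T ∩ F.J k i)) := by
    calc volume T ≤ volume ((⋃ i, T ∩ F.J k i) ∪ range (F.b k)) := measure_mono hcov
      _ ≤ volume (⋃ i, T ∩ F.J k i) + volume (range (F.b k)) := measure_union_le _ _
      _ = volume (⋃ i, T ∩ F.J k i) := by rw [(finite_range (F.b k)).measure_zero, add_zero]
      _ ≤ ∑ i : Fin (l k + 1), volume (T ∩ F.J k i) := measure_iUnion_fintype_le _ _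
      _ ≤ _ := by
        refine Finset.sum_le_sum fun i _ => (Real.volume_le_diam _).trans ?_
        rw [Metric.diam, ENNReal.ofReal_toReal]
        exact ((hTc.isBounded.subset inter_subset_left)).ediam_ne_top
  have hT2 : volume T = ENNReal.ofReal (Metric.diam T) := by
    have h := eq_Icc_of_connected_compact hT hTc
    have hle : sInf T ≤ sSup T := by
      obtain ⟨x, hx⟩ := hT.nonempty
      exact (csInf_le hTc.bddBelow hx).trans (le_csSup hTc.bddAbove hx)
    rw [h, Real.volume_Icc, Real.diam_Icc hle]
  rw [hT2, ← ENNReal.ofReal_sum_of_nonneg (fun _ _ => Metric.diam_nonneg),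
    ENNReal.ofReal_le_ofReal_iff (Finset.sum_nonneg fun _ _ => Metric.diam_nonneg)] at hvol
  have h3 : d * Metric.diam T ≤ ((l k : ℝ) + 1) * Metric.diam (F.f k '' T) := by
    calc d * Metric.diam T ≤ d * ∑ i : Fin (l k + 1), (Metric.diam (T ∩ F.J k i)) :=
          mul_le_mul_of_nonneg_left hvol hd.le
      _ = ∑ i : Fin (l k + 1), d * (Metric.diam (T ∩ F.J k i)) := Finset.mul_sum _ _ _
      _ ≤ ∑ i : Fin (l k + 1), Metric.diam (F.f k '' T) := Finset.sum_le_sum fun i _ => hpiece i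
      _ = _ := by simp
  have hl : (0:ℝ) < (l k : ℝ) + 1 := by positivity
  calc min e 1 * Metric.diam T ≤ d / ((l k : ℝ) + 1) * Metric.diam T :=
        mul_le_mul_of_nonneg_right ((min_le_left _ _).trans (he2 k)) Metric.diam_nonneg
    _ ≤ _ := by
      rw [div_mul_eq_mul_div, div_le_iff₀ hl, mul_comm (Metric.diam _)]
      exact h3

theorem h_supp (F : CPLIFS m l) : ∃ a c : ℝ, a < c ∧ suppInt F.f = Icc a c := by
  obtain ⟨K, hK0, hK1, hK⟩ := h_lip F
  unfold suppInt
  split_ifs with h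
  · exact ⟨_, _, by linarith, rfl⟩
  · set 𝒥 := {J : Set ℝ | J.Nonempty ∧ (∃ a b : ℝ, J = Set.Icc a b) ∧ ∀ k, F.f k '' J ⊆ J} with h𝒥
    -- fixed points
    have hfix : ∀ J ∈ 𝒥, ∀ k, ∃ x ∈ J, F.f k x = x := by
      rintro J ⟨hne, ⟨a, b, rfl⟩, hinv⟩ k
      have hab : a ≤ b := nonempty_Icc.1 hne
      obtain ⟨x, hx, hx2⟩ := exists_mem_Icc_isFixedPt_of_mapsTo (F.hcont k).continuousOn hab
        (mapsTo_iff_image_subset.2 (hinv k))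
      exact ⟨x, hx, hx2⟩
    have huniq : ∀ k x y, F.f k x = x → F.f k y = y → x = y := by
      intro k x y hx hy
      have := hK k x y
      rw [hx, hy] at this
      have h2 := abs_nonneg (x - y)
      have : |x - y| = 0 := by nlinarith
      exact sub_eq_zero.1 (abs_eq_zero.1 this)
    -- existence
    have hex : ∃ J, J ∈ 𝒥 := by
      obtain ⟨B, hB⟩ : ∃ B, ∀ k, |F.f k 0| ≤ B := by
        obtain ⟨B, hB⟩ := (finite_range fun k => |F.f k 0|).bddAbove
        exact ⟨B, fun k => hB ⟨k, rfl⟩⟩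
      have hB0 : 0 ≤ B := (abs_nonneg _).trans (hB ⟨0, by have := F.hm; omega⟩)
      have h1K : 0 < 1 - K := by linarith
      have hR : 0 ≤ B / (1 - K) := by positivity
      refine ⟨Icc (-(B / (1 - K))) (B / (1 - K)), ⟨0, by simp [hR]⟩, ⟨_, _, rfl⟩, ?_⟩
      rintro k _ ⟨x, hx, rfl⟩
      rw [mem_Icc, ← abs_le] at hx
      have h1 := hK k x 0
      rw [sub_zero] at h1
      have h2 : |F.f k x| ≤ |F.f k x - F.f k 0| + |F.f k 0| := by
        have := abs_add_le (F.f k x - F.f k 0) (F.f k 0)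
        simpa using this
      have h3 : B = (1 - K) * (B / (1 - K)) := by field_simp
      show _ ∈ Icc _ _
      rw [mem_Icc, ← abs_le]
      have := hB k
      nlinarith
    obtain ⟨J0, hJ0⟩ := hex
    choose x hx hx2 using hfix J0 hJ0
    have hxJ : ∀ k, x k ∈ ⋂₀ 𝒥 := by
      intro k J hJ
      obtain ⟨y, hy, hy2⟩ := hfix J hJ k
      rwa [huniq k _ _ (hx2 k) hy2]
    have hconn : IsConnected (⋂₀ 𝒥) := by
      refine ⟨⟨x ⟨0, by have := F.hm; omega⟩, hxJ _⟩, ?_⟩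
      refine OrdConnected.isPreconnected (ordConnected_sInter ?_)
      rintro J ⟨_, ⟨a, b, rfl⟩, _⟩
      exact ordConnected_Icc
    have hcomp : IsCompact (⋂₀ 𝒥) := by
      have hJc : IsCompact J0 := by obtain ⟨_, ⟨a, b, rfl⟩, _⟩ := hJ0; exact isCompact_Icc
      refine hJc.of_isClosed_subset (isClosed_sInter ?_) (sInter_subset_of_mem hJ0)
      rintro J ⟨_, ⟨a, b, rfl⟩, _⟩
      exact isClosed_Icc
    have heq := eq_Icc_of_connected_compact hconn hcomp
    refine ⟨_, _, ?_, heq⟩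
    by_contra hlt
    apply h
    refine ⟨x ⟨0, by have := F.hm; omega⟩, fun k => ?_⟩
    have e : ∀ j, x j = sInf (⋂₀ 𝒥) := by
      intro j
      have := hxJ j
      rw [heq] at this
      exact le_antisymm (this.2.trans (not_lt.1 hlt)) this.1
    rw [e, ← e k, hx2 k]

theorem h_noov {ι : Type*} (S : ι → ℝ → ℝ) (h : NoExactOverlap S) (p q : List ι)
    (hl : p.length = q.length) (h1 : 1 ≤ p.length) (he : compFam S p = compFam S q) : p = q := by
  have := h p.length h1 p.get (fun t => q.get (Fin.cast hl t)) (by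
    have hq : List.ofFn (fun t => q.get (Fin.cast hl t)) = q := by
      apply List.ext_get
      · simp [hl]
      · intro n h1 h2; simp
    rw [hq, List.ofFn_get, he])
  apply List.ext_get hl
  intro n h1 h2
  exact congrFun this ⟨n, h1⟩

theorem h_affine (F : CPLIFS m l) (p : List (CPLIFS.Idx m l)) :
    ∃ a b : ℝ, ∀ x, compFam F.S p x = a * x + b := by
  induction p with
  | nil => exact ⟨1, 0, fun x => by simp [h_compFam_nil]⟩
  | cons k p ih =>
    obtain ⟨a, b, h⟩ := ih
    refine ⟨F.ρ k.1 k.2 * a, F.ρ k.1 k.2 * b + F.t k.1 k.2, fun x => ?_⟩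
    rw [h_compFam_cons, Function.comp_apply, h, CPLIFS.S]; ring

theorem h_lift (F : CPLIFS m l) (u : List (Fin m)) (x : ℝ) :
    ∃ p : List (CPLIFS.Idx m l), compFam F.S p x = compFam F.f u x := by
  induction u with
  | nil => exact ⟨[], rfl⟩
  | cons k u ih =>
    obtain ⟨p, hp⟩ := ih
    obtain ⟨i, hi⟩ := h_ex_idx (F.b k) (F.hb k) (compFam F.f u x)
    refine ⟨⟨k, i⟩ :: p, ?_⟩
    rw [h_compFam_cons, h_compFam_cons, Function.comp_apply, Function.comp_apply, hp,
      (h_right F k _ i hi).1, CPLIFS.S]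

theorem h_noret (F : CPLIFS m l) (hno : NoExactOverlap F.S) (k : Fin m) (j : Fin (l k))
    (u : List (Fin m)) : compFam F.f (u ++ [k]) (F.b k j) ≠ F.b k j := by
  intro h
  rw [h_compFam_append] at h
  have hk : compFam F.f [k] = F.f k := rfl
  rw [hk, Function.comp_apply] at h
  obtain ⟨p, hp⟩ := h_lift F u (F.f k (F.b k j))
  rw [h] at hp
  set q1 : CPLIFS.Idx m l := ⟨k, j.castSucc⟩
  set q2 : CPLIFS.Idx m l := ⟨k, j.succ⟩
  have e1 : compFam F.S (p ++ [q1]) (F.b k j) = F.b k j := by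
    rw [h_compFam_append, Function.comp_apply]
    have : compFam F.S [q1] (F.b k j) = F.f k (F.b k j) := (h_left F k j).symm
    rw [this, hp]
  have e2 : compFam F.S (p ++ [q2]) (F.b k j) = F.b k j := by
    rw [h_compFam_append, Function.comp_apply]
    have : compFam F.S [q2] (F.b k j) = F.f k (F.b k j) := (h_right_b F k j).symm
    rw [this, hp]
  obtain ⟨a1, b1, h1⟩ := h_affine F (p ++ [q1])
  obtain ⟨a2, b2, h2⟩ := h_affine F (p ++ [q2])
  have key : compFam F.S ((p ++ [q1]) ++ (p ++ [q2])) = compFam F.S ((p ++ [q2]) ++ (p ++ [q1])) := by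
    rw [h_compFam_append F.S (p ++ [q1]), h_compFam_append F.S (p ++ [q2])]
    funext x
    rw [Function.comp_apply, Function.comp_apply, h1, h2, h2, h1]
    rw [h1] at e1
    rw [h2] at e2
    linear_combination (1 - a2) * e1 + (a1 - 1) * e2
  have := h_noov F.S hno _ _ (by simp) (by simp; omega) key
  have h3 := (List.append_inj this (by simp)).1
  have h4 : q1 = q2 := by simpa using h3
  have h5 : j.castSucc = j.succ := by simpa [q1, q2] using h4
  have := congrArg Fin.val h5
  simp at this

theorem h_words (M : ℕ) : {u : List (Fin m) | u.length < M}.Finite :=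
  List.finite_length_lt (Fin m) M

theorem h_ret (F : CPLIFS m l) (hno : NoExactOverlap F.S) (M : ℕ) :
    ∃ r > (0:ℝ), ∀ (k : Fin m) (j : Fin (l k)) (u : List (Fin m)), u.length < M →
      2 * r ≤ |compFam F.f (u ++ [k]) (F.b k j) - F.b k j| := by
  have : Finite {u : List (Fin m) | u.length < M} := (h_words M).to_subtype
  obtain ⟨d, hd, hd2⟩ := h_finmin
    (fun q : (Σ k : Fin m, Fin (l k)) × {u : List (Fin m) | u.length < M} =>
      |compFam F.f (q.2.1 ++ [q.1.1]) (F.b q.1.1 q.1.2) - F.b q.1.1 q.1.2|)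
    (fun q => abs_pos.2 (sub_ne_zero.2 (h_noret F hno _ _ _)))
  refine ⟨d / 2, by positivity, fun k j u hu => ?_⟩
  have := hd2 ⟨⟨k, j⟩, ⟨u, hu⟩⟩
  dsimp at this
  linarith

theorem h_compLip (F : CPLIFS m l) (K : ℝ) (hK0 : 0 < K)
    (hK : ∀ k x y, |F.f k x - F.f k y| ≤ K * |x - y|) (w : List (Fin m)) (x y : ℝ) :
    |compFam F.f w x - compFam F.f w y| ≤ K ^ w.length * |x - y| := by
  induction w with
  | nil => simp [h_compFam_nil]
  | cons k w ih =>
    rw [h_compFam_cons, Function.comp_apply, Function.comp_apply, List.length_cons, pow_succ']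
    refine (hK k _ _).trans ?_
    rw [mul_assoc]
    exact mul_le_mul_of_nonneg_left ih hK0.le

open Classical in
def h_nb (F : CPLIFS m l) (x0 r : ℝ) (p : Σ k : Fin m, Fin (l k)) : List (Fin m) → ℕ
  | [] => 0
  | k :: v => h_nb F x0 r p v +
      (if k = p.1 ∧ |compFam F.f v x0 - F.b p.1 p.2| < r then 1 else 0)

theorem h_nb_le (F : CPLIFS m l) (x0 r : ℝ) (p : Σ k : Fin m, Fin (l k)) (M : ℕ)
    (hret : ∀ (u : List (Fin m)), u.length < M →
      2 * r ≤ |compFam F.f (u ++ [p.1]) (F.b p.1 p.2) - F.b p.1 p.2|) (w : List (Fin m)) :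
    M * h_nb F x0 r p w ≤ w.length + M := by
  obtain ⟨K, hK0, hK1, hK⟩ := h_lip F
  have key : h_nb F x0 r p w = 0 ∨ ∃ u v, w = u ++ p.1 :: v ∧
      |compFam F.f v x0 - F.b p.1 p.2| < r ∧ M * h_nb F x0 r p w ≤ v.length + M := by
    induction w with
    | nil => left; rfl
    | cons k w ih =>
      by_cases hb : k = p.1 ∧ |compFam F.f w x0 - F.b p.1 p.2| < r
      · right
        refine ⟨[], w, by simp [hb.1], hb.2, ?_⟩
        rw [h_nb, if_pos hb]
        rcases ih with ih | ⟨u, v, h1, h2, h3⟩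
        · rw [ih]; simp
        · have hlen : M ≤ u.length := by
            by_contra hc
            have h4 := hret u (not_le.1 hc)
            have h5 := hb.2
            rw [h1, show u ++ p.1 :: v = (u ++ [p.1]) ++ v by simp, h_compFam_append,
              Function.comp_apply] at h5
            have h6 := h_compLip F K hK0 hK (u ++ [p.1]) (F.b p.1 p.2) (compFam F.f v x0)
            have h7 : K ^ (u ++ [p.1]).length ≤ 1 := pow_le_one₀ hK0.le hK1.le
            have h8 := abs_nonneg (F.b p.1 p.2 - compFam F.f v x0)
            rw [abs_sub_comm] at h2
            have h9 := abs_sub_le (compFam F.f (u ++ [p.1]) (F.b p.1 p.2))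
              (compFam F.f (u ++ [p.1]) (compFam F.f v x0)) (F.b p.1 p.2)
            nlinarith
          rw [h1]
          rw [h1] at h3
          simp only [List.length_append, List.length_cons]
          rw [mul_add]
          omega
      · rw [h_nb, if_neg hb, add_zero]
        rcases ih with ih | ⟨u, v, h1, h2, h3⟩
        · exact Or.inl ih
        · exact Or.inr ⟨k :: u, v, by simp [h1], h2, h3⟩
  rcases key with h | ⟨u, v, h1, h2, h3⟩
  · rw [h]; omega
  · refine h3.trans ?_
    rw [h1]; simp; omega

theorem h_breaks1 (F : CPLIFS m l) (r : ℝ) (hr : 0 < r) (k : Fin m) :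
    ∃ δ > (0:ℝ), ∀ G : CPLIFS m l, (∀ x, |F.f k x - G.f k x| < δ) →
      ∀ j, |G.b k j - F.b k j| < r := by
  obtain ⟨d, hd, hd2⟩ := h_finmin
    (fun q : {q : Fin (l k) × Fin (l k) // q.1 < q.2} => F.b k q.1.2 - F.b k q.1.1)
    (fun q => sub_pos.2 (F.hb k q.2))
  have hgap : ∀ j j', j < j' → d ≤ F.b k j' - F.b k j := fun j j' h => hd2 ⟨(j, j'), h⟩
  obtain ⟨e, he, he2⟩ := h_finmin
    (fun j : Fin (l k) => |F.ρ k j.succ - F.ρ k j.castSucc|)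
    (fun j => abs_pos.2 (sub_ne_zero.2 (F.hconsec k j).symm))
  obtain ⟨h, hh, hhr, hhd⟩ : ∃ h > (0:ℝ), h ≤ r ∧ 2 * h ≤ d :=
    ⟨min r (d / 2), by positivity, min_le_left _ _, by
      have := min_le_right r (d / 2); linarith⟩
  refine ⟨h * e / 8, by positivity, fun G hG => ?_⟩
  have hex : ∀ j, ∃ j', |G.b k j' - F.b k j| < h := by
    intro j
    by_contra hc
    push Not at hc
    set b := F.b k j with hb
    have f1 : F.f k (b + h / 2) = F.ρ k j.succ * (b + h / 2) + F.t k j.succ := by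
      refine F.haff k _ _ (fun j' hj => ?_) (fun j' hj => ?_)
      · have : F.b k j' ≤ b := (F.hb k).monotone (Fin.le_def.2 (by rw [Fin.val_succ] at hj; omega))
        linarith
      · have := hgap j j' (Fin.lt_def.2 (by rw [Fin.val_succ] at hj; omega))
        linarith
    have f2 : F.f k (b - h / 2) = F.ρ k j.castSucc * (b - h / 2) + F.t k j.castSucc := by
      refine F.haff k _ _ (fun j' hj => ?_) (fun j' hj => ?_)
      · have := hgap j' j (Fin.lt_def.2 (by simpa using hj))
        linarith
      · have : b ≤ F.b k j' := (F.hb k).monotone (Fin.le_def.2 (by simpa using hj))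
        linarith
    have f3 := h_left F k j
    have f4 := h_right_b F k j
    rw [← hb] at f3 f4
    obtain ⟨i, hi⟩ := h_ex_idx (G.b k) (G.hb k) (b - h)
    have g : ∀ x, b - h < x → x < b + h → G.f k x = G.ρ k i * x + G.t k i := by
      intro x hx1 hx2
      refine G.haff k i x (fun j' hj => lt_of_le_of_lt ((hi j').1 hj) hx1) (fun j' hj => ?_)
      have h1 : b - h < G.b k j' := by
        by_contra hc2
        have := (hi j').2 (not_lt.1 hc2)
        omega
      have h2 := hc j'
      rcases le_abs.1 h2 with h3 | h3 <;> linarith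
    have g1 := g (b + h / 2) (by linarith) (by linarith)
    have g2 := g (b - h / 2) (by linarith) (by linarith)
    have g3 := g b (by linarith) (by linarith)
    have d1 := abs_lt.1 (hG (b + h / 2))
    have d2 := abs_lt.1 (hG (b - h / 2))
    have d3 := abs_lt.1 (hG b)
    have e1 : F.f k (b + h / 2) + F.f k (b - h / 2) - 2 * F.f k b
        = h / 2 * (F.ρ k j.succ - F.ρ k j.castSucc) := by
      linear_combination f1 + f2 - f3 - f4
    have e2 : G.f k (b + h / 2) + G.f k (b - h / 2) - 2 * G.f k b = 0 := by
      rw [g1, g2, g3]; ring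
    have e3 : |h / 2 * (F.ρ k j.succ - F.ρ k j.castSucc)| < h * e / 2 := by
      rw [← e1, abs_lt]
      constructor <;> linarith [d1.1, d1.2, d2.1, d2.2, d3.1, d3.2]
    rw [abs_mul, abs_of_pos (by positivity : (0:ℝ) < h / 2)] at e3
    have := he2 j
    nlinarith
  choose σ hσ using hex
  have hmono : StrictMono σ := by
    intro j j' hjj
    rw [← (G.hb k).lt_iff_lt]
    have h1 := abs_lt.1 (hσ j)
    have h2 := abs_lt.1 (hσ j')
    have := hgap j j' hjj
    linarith [h1.1, h1.2, h2.1, h2.2]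
  have hid : σ = id := by
    apply (StrictMono.range_inj hmono strictMono_id).1
    rw [(Finite.surjective_of_injective hmono.injective).range_eq, range_id]
  intro j
  have := hσ j
  rw [hid] at this
  exact lt_of_lt_of_le this hhr

theorem h_breaks (F : CPLIFS m l) (r : ℝ) (hr : 0 < r) :
    ∃ δ > (0:ℝ), ∀ G : CPLIFS m l, (∀ k x, |F.f k x - G.f k x| < δ) →
      ∀ k j, |G.b k j - F.b k j| < r := by
  choose d hd hd2 using h_breaks1 F r hr
  obtain ⟨δ, hδ, hδ2⟩ := h_finmin d hd
  exact ⟨δ, hδ, fun G hG k => hd2 k G fun x => (hG k x).trans_le (hδ2 k)⟩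

theorem h_track (F G : CPLIFS m l) (K δ : ℝ) (hK0 : 0 < K) (hK1 : K < 1)
    (hK : ∀ k x y, |F.f k x - F.f k y| ≤ K * |x - y|)
    (hG : ∀ k x, |F.f k x - G.f k x| < δ) (w : List (Fin m)) (x y : ℝ) :
    |compFam G.f w x - compFam F.f w y| ≤ K ^ w.length * |x - y| + δ / (1 - K) := by
  have hδ : 0 < δ := by
    have hm := F.hm
    exact (abs_nonneg _).trans_lt (hG ⟨0, by omega⟩ 0)
  have h1K : 0 < 1 - K := by linarith
  induction w with
  | nil => simp [h_compFam_nil]; positivity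
  | cons k w ih =>
    rw [h_compFam_cons, h_compFam_cons, Function.comp_apply, Function.comp_apply,
      List.length_cons, pow_succ']
    have h1 := hG k (compFam G.f w x)
    rw [abs_sub_comm] at h1
    have h2 := hK k (compFam G.f w x) (compFam F.f w y)
    have h3 := abs_sub_le (G.f k (compFam G.f w x)) (F.f k (compFam G.f w x))
      (F.f k (compFam F.f w y))
    have h4 := mul_le_mul_of_nonneg_left ih hK0.le
    have h5 : δ = (1 - K) * (δ / (1 - K)) := by field_simp
    nlinarith

theorem h_compCont (F : CPLIFS m l) (w : List (Fin m)) : Continuous (compFam F.f w) := by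
  induction w with
  | nil => exact continuous_id
  | cons k w ih => exact (F.hcont k).comp ih

theorem h_diam_lower (F : CPLIFS m l) (c : ℝ) (hc0 : 0 < c)
    (hlow : ∀ k, ∀ T : Set ℝ, IsConnected T → IsCompact T →
      c * Metric.diam T ≤ Metric.diam (F.f k '' T)) (T : Set ℝ) (hT : IsConnected T)
      (hTc : IsCompact T) (w : List (Fin m)) :
    c ^ w.length * Metric.diam T ≤ Metric.diam (compFam F.f w '' T) := by
  induction w with
  | nil => simp [h_compFam_nil]
  | cons k w ih =>
    rw [h_compFam_cons, image_comp, List.length_cons, pow_succ', mul_assoc]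
    refine (mul_le_mul_of_nonneg_left ih hc0.le).trans (hlow k _ ?_ ?_)
    · exact hT.image _ (h_compCont F w).continuousOn
    · exact hTc.image (h_compCont F w)

theorem h_diam_upper (F : CPLIFS m l) (T : Set ℝ)
      (hTc : IsCompact T) (k : Fin m) :
    Metric.diam (F.f k '' T) ≤ Metric.diam T := by
  obtain ⟨K, hK0, hK1, hK⟩ := h_lip F
  refine (h_diam_le (F.f k) T K hK0.le hTc.isBounded (fun x _ y _ => hK k x y)).trans ?_
  have := Metric.diam_nonneg (s := T)
  nlinarith

theorem h_ratio (F G : CPLIFS m l) (c : ℝ) (hc0 : 0 < c) (hc1 : c ≤ 1)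
    (hlow : ∀ k, ∀ T : Set ℝ, IsConnected T → IsCompact T →
      c * Metric.diam T ≤ Metric.diam (F.f k '' T))
    (K δ r : ℝ) (hK0 : 0 < K) (hK1 : K < 1) (hr : 0 < r)
    (hK : ∀ k x y, |F.f k x - F.f k y| ≤ K * |x - y|)
    (hG : ∀ k x, |F.f k x - G.f k x| < δ)
    (hρ : ∀ k i, abs (Real.log |F.ρ k i| - Real.log |G.ρ k i|) < δ)
    (hb : ∀ k j, |G.b k j - F.b k j| < r / 4) (hδ : δ / (1 - K) ≤ r / 4)
    (a1 c1 a2 c2 : ℝ) (h1 : a1 < c1) (h2 : a2 < c2) :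
    ∃ A > (0:ℝ), ∀ w : List (Fin m), Metric.diam (compFam G.f w '' Icc a2 c2) ≤
      A * c⁻¹ ^ (∑ p, h_nb F a1 r p w) * Real.exp δ ^ w.length *
        Metric.diam (compFam F.f w '' Icc a1 c1) := by
  classical
  have hδ0 : 0 < δ := by
    have hm := F.hm
    exact (abs_nonneg _).trans_lt (hG ⟨0, by omega⟩ 0)
  have hexp : 1 ≤ Real.exp δ := Real.one_le_exp hδ0.le
  set C := c⁻¹ with hC
  have hC1 : 1 ≤ C := (one_le_inv₀ hc0).2 hc1
  have hcC : c * C = 1 := mul_inv_cancel₀ hc0.ne'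
  have hC0 : 0 < C := by linarith
  set R := |a2 - a1| + |c2 - a1| + |c1 - a1| + 1 with hR
  have hR0 : 0 < R := by positivity
  have hRG : ∀ x ∈ Icc a2 c2, |x - a1| ≤ R := by
    intro x hx
    have := hx.1
    have := hx.2
    have := abs_nonneg (c1 - a1)
    have := neg_abs_le (a2 - a1)
    have := le_abs_self (c2 - a1)
    have := abs_nonneg (a2 - a1)
    have := abs_nonneg (c2 - a1)
    rw [abs_le]
    constructor <;> linarith
  have hRF : ∀ x ∈ Icc a1 c1, |x - a1| ≤ R := by
    intro x hx
    have := hx.1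
    have := hx.2
    have := le_abs_self (c1 - a1)
    have := abs_nonneg (a2 - a1)
    have := abs_nonneg (c2 - a1)
    rw [abs_le]
    constructor <;> linarith
  obtain ⟨j0, hj0⟩ := exists_pow_lt_of_lt_one (show 0 < r / 4 / R by positivity) hK1
  rw [lt_div_iff₀ hR0] at hj0
  set A0 := (c2 - a2) / (c1 - a1) with hA0
  have hA0p : 0 < A0 := div_pos (by linarith) (by linarith)
  have key : ∀ w : List (Fin m), Metric.diam (compFam G.f w '' Icc a2 c2) ≤
      A0 * C ^ (min w.length j0 + ∑ p, h_nb F a1 r p w) * Real.exp δ ^ w.length *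
        Metric.diam (compFam F.f w '' Icc a1 c1) := by
    intro w
    induction w with
    | nil =>
      simp only [h_compFam_nil, image_id, List.length_nil, h_nb, Finset.sum_const_zero,
        Nat.zero_min, add_zero, pow_zero, mul_one, Real.diam_Icc h1.le, Real.diam_Icc h2.le]
      rw [hA0, div_mul_cancel₀ _ (by linarith)]
    | cons k v ih =>
      have hTFc : IsCompact (compFam F.f v '' Icc a1 c1) := isCompact_Icc.image (h_compCont F v)
      have hTGc : IsCompact (compFam G.f v '' Icc a2 c2) := isCompact_Icc.image (h_compCont G v)
      have hTF : IsConnected (compFam F.f v '' Icc a1 c1) :=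
        (isConnected_Icc h1.le).image _ (h_compCont F v).continuousOn
      rw [h_compFam_cons, h_compFam_cons, image_comp, image_comp, List.length_cons]
      set TF := compFam F.f v '' Icc a1 c1 with hTFdef
      set TG := compFam G.f v '' Icc a2 c2 with hTGdef
      have hNmono : ∀ p, h_nb F a1 r p v ≤ h_nb F a1 r p (k :: v) := by
        intro p; rw [h_nb]; omega
      have hSmono : ∑ p, h_nb F a1 r p v ≤ ∑ p, h_nb F a1 r p (k :: v) :=
        Finset.sum_le_sum fun p _ => hNmono p
      have hD0 : 0 ≤ Metric.diam TF := Metric.diam_nonneg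
      have hD0' : 0 ≤ Metric.diam (F.f k '' TF) := Metric.diam_nonneg
      by_cases hgood : j0 ≤ v.length ∧ ∀ j : Fin (l k), r ≤ |compFam F.f v a1 - F.b k j|
      · obtain ⟨hlen, hgood⟩ := hgood
        set y := compFam F.f v a1 with hy
        have hKp : K ^ v.length * R < r / 4 := by
          refine lt_of_le_of_lt (mul_le_mul_of_nonneg_right ?_ hR0.le) hj0
          exact pow_le_pow_of_le_one hK0.le hK1.le hlen
        have hKv : 0 ≤ K ^ v.length := by positivity
        have hFy : ∀ z ∈ TF, |z - y| < r / 2 := by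
          rintro _ ⟨x, hx, rfl⟩
          refine lt_of_le_of_lt (h_compLip F K hK0 hK v x a1) ?_
          have := mul_le_mul_of_nonneg_left (hRF x hx) hKv
          linarith
        have hGy : ∀ z ∈ TG, |z - y| < r / 2 := by
          rintro _ ⟨x, hx, rfl⟩
          refine lt_of_le_of_lt (h_track F G K δ hK0 hK1 hK hG v x a1) ?_
          have := mul_le_mul_of_nonneg_left (hRG x hx) hKv
          linarith
        obtain ⟨i, hi⟩ := h_ex_idx (F.b k) (F.hb k) y
        have hi1 : ∀ j : Fin (l k), (j : ℕ) < i → F.b k j ≤ y - r := by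
          intro j hj
          have h3 := (hi j).1 hj
          have h4 := hgood j
          rw [abs_of_nonneg (by linarith)] at h4
          linarith
        have hi2 : ∀ j : Fin (l k), (i : ℕ) ≤ j → y + r ≤ F.b k j := by
          intro j hj
          have h3 : y < F.b k j := by
            by_contra hc2
            have := (hi j).2 (not_lt.1 hc2)
            omega
          have h4 := hgood j
          rw [abs_of_neg (by linarith)] at h4
          linarith
        have hFaff : ∀ z ∈ TF, F.f k z = F.ρ k i * z + F.t k i := by
          intro z hz
          have h3 := abs_lt.1 (hFy z hz)
          refine F.haff k i z (fun j hj => ?_) (fun j hj => ?_)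
          · linarith [hi1 j hj, h3.1]
          · linarith [hi2 j hj, h3.2]
        have hGaff : ∀ z ∈ TG, G.f k z = G.ρ k i * z + G.t k i := by
          intro z hz
          have h3 := abs_lt.1 (hGy z hz)
          refine G.haff k i z (fun j hj => ?_) (fun j hj => ?_)
          · linarith [hi1 j hj, h3.1, (abs_lt.1 (hb k j)).2]
          · linarith [hi2 j hj, h3.2, (abs_lt.1 (hb k j)).1]
        have hρF : 0 < |F.ρ k i| := abs_pos.2 (F.hρ0 k i)
        have hρG : 0 < |G.ρ k i| := abs_pos.2 (G.hρ0 k i)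
        have hE : Metric.diam (G.f k '' TG) ≤ |G.ρ k i| * Metric.diam TG := by
          refine h_diam_le _ _ _ hρG.le hTGc.isBounded (fun x hx z hz => ?_)
          rw [hGaff x hx, hGaff z hz, ← abs_mul]
          apply le_of_eq; congr 1; ring
        have hD : |F.ρ k i| * Metric.diam TF ≤ Metric.diam (F.f k '' TF) := by
          refine h_diam_ge _ _ _ hρF (hTFc.image (F.hcont k)).isBounded (fun x hx z hz => ?_)
          rw [hFaff x hx, hFaff z hz, ← abs_mul]
          apply le_of_eq; congr 1; ring
        have hslope : |G.ρ k i| ≤ Real.exp δ * |F.ρ k i| := by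
          have h3 := (abs_lt.1 (hρ k i)).1
          rw [← Real.exp_log hρF, ← Real.exp_log hρG, ← Real.exp_add]
          apply Real.exp_le_exp.2
          linarith
        set X := A0 * C ^ (min v.length j0 + ∑ p, h_nb F a1 r p v) * Real.exp δ ^ v.length with hX
        have hX0 : 0 ≤ X := by positivity
        have hX' : Real.exp δ * X ≤ A0 * C ^ (min (v.length + 1) j0 + ∑ p, h_nb F a1 r p (k :: v)) *
            Real.exp δ ^ (v.length + 1) := by
          rw [hX, pow_succ]
          have : C ^ (min v.length j0 + ∑ p, h_nb F a1 r p v) ≤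
            C ^ (min (v.length + 1) j0 + ∑ p, h_nb F a1 r p (k :: v)) :=
            pow_le_pow_right₀ hC1 (by omega)
          calc _ = A0 * C ^ (min v.length j0 + ∑ p, h_nb F a1 r p v) * (Real.exp δ ^ v.length * Real.exp δ) := by ring
            _ ≤ _ := by gcongr
        calc Metric.diam (G.f k '' TG) ≤ |G.ρ k i| * Metric.diam TG := hE
          _ ≤ (Real.exp δ * |F.ρ k i|) * (X * Metric.diam TF) :=
            mul_le_mul hslope ih Metric.diam_nonneg (by positivity)
          _ = (Real.exp δ * X) * (|F.ρ k i| * Metric.diam TF) := by ring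
          _ ≤ (Real.exp δ * X) * Metric.diam (F.f k '' TF) :=
            mul_le_mul_of_nonneg_left hD (by positivity)
          _ ≤ _ := mul_le_mul_of_nonneg_right hX' hD0'
      · have hinc : min v.length j0 + ∑ p, h_nb F a1 r p v + 1 ≤
            min (v.length + 1) j0 + ∑ p, h_nb F a1 r p (k :: v) := by
          by_cases hl : j0 ≤ v.length
          · have : ∃ j : Fin (l k), |compFam F.f v a1 - F.b k j| < r := by
              by_contra hc2
              push Not at hc2
              exact hgood ⟨hl, hc2⟩
            obtain ⟨j, hj⟩ := this
            have hlt : ∑ p, h_nb F a1 r p v < ∑ p, h_nb F a1 r p (k :: v) := by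
              refine Finset.sum_lt_sum (fun p _ => hNmono p) ⟨⟨k, j⟩, Finset.mem_univ _, ?_⟩
              rw [h_nb, if_pos ⟨rfl, hj⟩]
              omega
            omega
          · omega
        set X := A0 * C ^ (min v.length j0 + ∑ p, h_nb F a1 r p v) * Real.exp δ ^ v.length with hX
        have hX0 : 0 ≤ X := by positivity
        have hX' : X * C ≤ A0 * C ^ (min (v.length + 1) j0 + ∑ p, h_nb F a1 r p (k :: v)) *
            Real.exp δ ^ (v.length + 1) := by
          have h3 := pow_le_pow_right₀ hC1 hinc
          have h4 : Real.exp δ ^ v.length ≤ Real.exp δ ^ (v.length + 1) :=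
            pow_le_pow_right₀ hexp (by omega)
          rw [pow_succ] at h3
          rw [hX]
          calc _ = A0 * (C ^ (min v.length j0 + ∑ p, h_nb F a1 r p v) * C) * Real.exp δ ^ v.length := by ring
            _ ≤ _ := by gcongr
        have hD : Metric.diam TF ≤ C * Metric.diam (F.f k '' TF) := by
          have := mul_le_mul_of_nonneg_left (hlow k TF hTF hTFc) hC0.le
          rwa [← mul_assoc, mul_comm C c, hcC, one_mul] at this
        calc Metric.diam (G.f k '' TG) ≤ Metric.diam TG := h_diam_upper G TG hTGc k
          _ ≤ X * Metric.diam TF := ih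
          _ ≤ X * (C * Metric.diam (F.f k '' TF)) := mul_le_mul_of_nonneg_left hD hX0
          _ = (X * C) * Metric.diam (F.f k '' TF) := by ring
          _ ≤ _ := mul_le_mul_of_nonneg_right hX' hD0'
  refine ⟨A0 * C ^ j0, by positivity, fun w => (key w).trans ?_⟩
  refine mul_le_mul_of_nonneg_right (mul_le_mul_of_nonneg_right ?_ (by positivity)) Metric.diam_nonneg
  rw [mul_assoc, ← pow_add]
  exact mul_le_mul_of_nonneg_left (pow_le_pow_right₀ hC1 (by omega)) hA0p.le

/-- Uniform comparison of cylinder lengths. -/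
theorem h_compare (F : CPLIFS m l) (hno : NoExactOverlap F.S) (η : ℝ) (hη : 0 < η) :
    ∃ δ > (0:ℝ), ∀ G : CPLIFS m l, CPLIFS.Close δ F G → ∃ A > (0:ℝ), ∀ w : List (Fin m),
      Metric.diam (compFam G.f w '' suppInt G.f) ≤
        A * Real.exp (η * w.length) * Metric.diam (compFam F.f w '' suppInt F.f) := by
  obtain ⟨K, hK0, hK1, hK⟩ := h_lip F
  obtain ⟨c, hc0, hc1, hlow⟩ := h_lower F
  have hC1 : 1 ≤ c⁻¹ := (one_le_inv₀ hc0).2 hc1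
  have hC0 : 0 < c⁻¹ := by linarith
  set P : ℝ := (Fintype.card (Σ k : Fin m, Fin (l k)) : ℝ) with hP
  have hP0 : 0 ≤ P := by positivity
  set L := Real.log c⁻¹ with hL
  have hL0 : 0 ≤ L := Real.log_nonneg hC1
  obtain ⟨M, hM⟩ := exists_nat_gt (2 * P * L / η)
  have hM0 : (0:ℝ) < M := lt_of_le_of_lt (by positivity) hM
  rw [div_lt_iff₀ hη] at hM
  obtain ⟨r, hr, hret⟩ := h_ret F hno M
  obtain ⟨δ1, hδ1, hbr⟩ := h_breaks F (r / 4) (by positivity)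
  have h1K : 0 < 1 - K := by linarith
  refine ⟨min δ1 (min (η / 2) (r / 4 * (1 - K))), by positivity, fun G hG => ?_⟩
  set δ := min δ1 (min (η / 2) (r / 4 * (1 - K))) with hδ
  have hδ0 : 0 < δ := by positivity
  have hδa : δ ≤ δ1 := min_le_left _ _
  have hδb : δ ≤ η / 2 := (min_le_right _ _).trans (min_le_left _ _)
  have hδc : δ ≤ r / 4 * (1 - K) := (min_le_right _ _).trans (min_le_right _ _)
  obtain ⟨_, hρ, hd⟩ := hG
  obtain ⟨a1, c1, h1, e1⟩ := h_supp F
  obtain ⟨a2, c2, h2, e2⟩ := h_supp G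
  obtain ⟨A, hA, hAw⟩ := h_ratio F G c hc0 hc1 hlow K δ r hK0 hK1 hr hK hd hρ
    (hbr G fun k x => (hd k x).trans_le hδa) (by rwa [div_le_iff₀ h1K]) a1 c1 a2 c2 h1 h2
  refine ⟨A * Real.exp (P * L), by positivity, fun w => ?_⟩
  rw [e1, e2]
  refine (hAw w).trans (mul_le_mul_of_nonneg_right ?_ Metric.diam_nonneg)
  rw [mul_assoc, mul_assoc]
  refine mul_le_mul_of_nonneg_left ?_ hA.le
  have hN : (M:ℝ) * ((∑ p, h_nb F a1 r p w : ℕ) : ℝ) ≤ P * (w.length + M) := by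
    have : M * (∑ p, h_nb F a1 r p w) ≤ Fintype.card (Σ k : Fin m, Fin (l k)) * (w.length + M) := by
      rw [Finset.mul_sum]
      refine (Finset.sum_le_card_nsmul _ _ (w.length + M) fun p _ => ?_).trans ?_
      · exact h_nb_le F a1 r p M (fun u hu => hret p.1 p.2 u hu) w
      · simp
    rw [hP]
    exact_mod_cast this
  rw [← Real.exp_log hC0, ← hL, ← Real.exp_nat_mul, ← Real.exp_nat_mul, ← Real.exp_add,
    ← Real.exp_add]
  apply Real.exp_le_exp.2
  set N : ℝ := ((∑ p, h_nb F a1 r p w : ℕ) : ℝ) with hNdef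
  have hn : (0:ℝ) ≤ w.length := by positivity
  have h3 : N * L ≤ P * L + η / 2 * w.length := by
    have h4 : M * (N * L) ≤ M * (P * L + η / 2 * w.length) := by
      nlinarith [mul_le_mul_of_nonneg_right hN hL0, mul_le_mul_of_nonneg_right hM.le hn]
    exact le_of_mul_le_mul_left h4 hM0
  nlinarith

theorem h_sum_pos (F : CPLIFS m l) (s : ℝ) : ∃ c > (0:ℝ), ∃ D > (0:ℝ), ∀ n : ℕ,
    (∀ w : Fin n → Fin m, c ^ n * D ≤ Metric.diam (compFam F.f (List.ofFn w) '' suppInt F.f)) ∧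
    (∀ w : Fin n → Fin m, Metric.diam (compFam F.f (List.ofFn w) '' suppInt F.f) ≤ D) ∧
    0 < ∑ w : Fin n → Fin m, Metric.diam (compFam F.f (List.ofFn w) '' suppInt F.f) ^ s := by
  obtain ⟨c, hc0, hc1, hlow⟩ := h_lower F
  obtain ⟨a, b, hab, e⟩ := h_supp F
  have hD : 0 < Metric.diam (suppInt F.f) := by
    rw [e, Real.diam_Icc hab.le]; linarith
  have hup : ∀ w : List (Fin m), Metric.diam (compFam F.f w '' suppInt F.f) ≤
      Metric.diam (suppInt F.f) := by
    intro w
    induction w with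
    | nil => simp [h_compFam_nil]
    | cons k w ih =>
      rw [h_compFam_cons, image_comp]
      refine (h_diam_upper F _ ?_ k).trans ih
      rw [e]; exact isCompact_Icc.image (h_compCont F w)
  have hlo : ∀ n, ∀ w : Fin n → Fin m, c ^ n * Metric.diam (suppInt F.f) ≤
      Metric.diam (compFam F.f (List.ofFn w) '' suppInt F.f) := by
    intro n w
    have := h_diam_lower F c hc0 hlow (suppInt F.f) (by rw [e]; exact isConnected_Icc hab.le)
      (by rw [e]; exact isCompact_Icc) (List.ofFn w)
    rwa [List.length_ofFn] at this
  refine ⟨c, hc0, _, hD, fun n => ⟨hlo n, fun w => hup _, ?_⟩⟩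
  have : Nonempty (Fin n → Fin m) := ⟨fun _ => ⟨0, by have := F.hm; omega⟩⟩
  refine Finset.sum_pos (fun w _ => Real.rpow_pos_of_pos ?_ s) Finset.univ_nonempty
  exact lt_of_lt_of_le (by positivity) (hlo n w)

theorem h_final (F : CPLIFS m l) (hno : NoExactOverlap F.S)
    (s : ℝ) (hs0 : 0 < s) (ε : ℝ) (hε : 0 < ε) :
    ∃ δ > (0 : ℝ), ∀ G : CPLIFS m l, CPLIFS.Close δ F G →
      pressure G.f s < pressure F.f s + ε := by
  obtain ⟨δ, hδ, hcmp⟩ := h_compare F hno (ε / (4 * s)) (by positivity)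
  refine ⟨δ, hδ, fun G hG => ?_⟩
  obtain ⟨A, hA, hAw⟩ := hcmp G hG
  set ZF : ℕ → ℝ := fun n => ∑ w : Fin n → Fin m,
        Metric.diam (compFam F.f (List.ofFn w) '' suppInt F.f) ^ s with hZF
  set ZG : ℕ → ℝ := fun n => ∑ w : Fin n → Fin m,
        Metric.diam (compFam G.f (List.ofFn w) '' suppInt G.f) ^ s with hZG
  have pF : pressure F.f s = limsup (fun n : ℕ => (n:ℝ)⁻¹ * Real.log (ZF n)) atTop := rfl
  have pG : pressure G.f s = limsup (fun n : ℕ => (n:ℝ)⁻¹ * Real.log (ZG n)) atTop := rfl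
  obtain ⟨cF, hcF, DF, hDF, hF⟩ := h_sum_pos F s
  obtain ⟨cG, hcG, DG, hDG, hGb⟩ := h_sum_pos G s
  have hm := F.hm
  have hm0 : (0:ℝ) < m := by exact_mod_cast (by omega : 0 < m)
  -- upper bound for F
  have hub : IsBoundedUnder (· ≤ ·) atTop (fun n : ℕ => (n:ℝ)⁻¹ * Real.log (ZF n)) := by
    refine isBoundedUnder_of_eventually_le (a := Real.log m + |s * Real.log DF|) ?_
    filter_upwards [eventually_ge_atTop 1] with n hn
    have hn0 : (1:ℝ) ≤ n := by exact_mod_cast hn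
    have h1 : ZF n ≤ (m:ℝ) ^ n * DF ^ s := by
      calc ZF n ≤ ∑ w : Fin n → Fin m, DF ^ s :=
            Finset.sum_le_sum fun w _ =>
              Real.rpow_le_rpow Metric.diam_nonneg ((hF n).2.1 w) hs0.le
        _ = _ := by simp
    have h2 : Real.log (ZF n) ≤ n * Real.log m + s * Real.log DF := by
      refine (Real.log_le_log (hF n).2.2 h1).trans ?_
      rw [Real.log_mul (by positivity) (by positivity), Real.log_pow, Real.log_rpow hDF]
    rw [inv_mul_le_iff₀ (by linarith)]
    have h3 := le_abs_self (s * Real.log DF)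
    have h4 := abs_nonneg (s * Real.log DF)
    nlinarith
  have hcob : IsCoboundedUnder (· ≤ ·) atTop (fun n : ℕ => (n:ℝ)⁻¹ * Real.log (ZG n)) := by
    apply IsBoundedUnder.isCoboundedUnder_le
    refine isBoundedUnder_of_eventually_ge (a := s * Real.log cG - |s * Real.log DG|) ?_
    filter_upwards [eventually_ge_atTop 1] with n hn
    have hn0 : (1:ℝ) ≤ n := by exact_mod_cast hn
    have h1 : (cG ^ n * DG) ^ s ≤ ZG n := by
      let w0 : Fin n → Fin m := fun _ => ⟨0, by omega⟩
      refine (Real.rpow_le_rpow (by positivity) ((hGb n).1 w0) hs0.le).trans ?_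
      exact Finset.single_le_sum
        (f := fun w : Fin n → Fin m => Metric.diam (compFam G.f (List.ofFn w) '' suppInt G.f) ^ s)
        (fun w _ => Real.rpow_nonneg Metric.diam_nonneg s) (Finset.mem_univ w0)
    have h2 : s * (n * Real.log cG + Real.log DG) ≤ Real.log (ZG n) := by
      refine le_trans ?_ (Real.log_le_log (by positivity) h1)
      rw [Real.log_rpow (by positivity), Real.log_mul (by positivity) (by positivity), Real.log_pow]
    rw [le_inv_mul_iff₀ (by linarith)]
    have h3 := neg_abs_le (s * Real.log DG)
    have h4 := abs_nonneg (s * Real.log DG)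
    nlinarith
  have hev : ∀ᶠ n : ℕ in atTop, (n:ℝ)⁻¹ * Real.log (ZF n) < pressure F.f s + ε / 4 :=
    eventually_lt_of_limsup_lt (by rw [← pF]; linarith) hub
  have hlim : Tendsto (fun n : ℕ => (n:ℝ)⁻¹ * (s * Real.log A)) atTop (nhds 0) := by
    have := (tendsto_inv_atTop_nhds_zero_nat (𝕜 := ℝ)).mul_const (s * Real.log A)
    simpa using this
  have hev2 : ∀ᶠ n : ℕ in atTop, (n:ℝ)⁻¹ * (s * Real.log A) < ε / 4 :=
    hlim.eventually_lt_const (by positivity)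
  have hle : pressure G.f s ≤ pressure F.f s + 3 * ε / 4 := by
    rw [pG]
    refine limsup_le_of_le hcob ?_
    filter_upwards [hev, hev2, eventually_ge_atTop 1] with n hn1 hn2 hn
    have hn0 : (0:ℝ) < n := by exact_mod_cast hn
    have h1 : ZG n ≤ (A * Real.exp (ε / (4 * s) * n)) ^ s * ZF n := by
      rw [hZG, hZF]
      simp only
      rw [Finset.mul_sum]
      refine Finset.sum_le_sum fun w _ => ?_
      rw [← Real.mul_rpow (by positivity) Metric.diam_nonneg]
      refine Real.rpow_le_rpow Metric.diam_nonneg ?_ hs0.le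
      have := hAw (List.ofFn w)
      rwa [List.length_ofFn] at this
    have h2 : Real.log (ZG n) ≤ s * Real.log A + ε / 4 * n + Real.log (ZF n) := by
      refine (Real.log_le_log (hGb n).2.2 h1).trans (le_of_eq ?_)
      rw [Real.log_mul (by positivity) (hF n).2.2.ne', Real.log_rpow (by positivity),
        Real.log_mul hA.ne' (Real.exp_pos _).ne', Real.log_exp]
      have h5 : s * (ε / (4 * s) * n) = ε / 4 * n := by field_simp
      rw [mul_add, h5]
    have h3 : (n:ℝ)⁻¹ * Real.log (ZG n) ≤
        (n:ℝ)⁻¹ * (s * Real.log A + ε / 4 * n + Real.log (ZF n)) :=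
      mul_le_mul_of_nonneg_left h2 (by positivity)
    have h4 : (n:ℝ)⁻¹ * (s * Real.log A + ε / 4 * n + Real.log (ZF n)) =
        (n:ℝ)⁻¹ * (s * Real.log A) + ε / 4 + (n:ℝ)⁻¹ * Real.log (ZF n) := by
      field_simp
    linarith
  linarith

end helpers

/-- Let `F` be a CPLIFS with attractor `Λ` whose generated self-similar IFS
has no exact overlapping, and let `s ∈ (0, dim_H Λ)`.  Then for every `ε > 0` there is
`δ > 0` such that every CPLIFS `G` that is δ-close to `F` satisfies `Φ̂(s) < Φ(s) + ε`,
where `Φ, Φ̂` are the natural pressure functions of `F` and `G`. -/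
theorem pressure_upper_semicontinuous
    {m : ℕ} {l : Fin m → ℕ} (F : CPLIFS m l)
    (Λ : Set ℝ) (hΛne : Λ.Nonempty) (hΛc : IsCompact Λ)
    (hΛinv : Λ = ⋃ k, F.f k '' Λ)
    (hno : NoExactOverlap F.S)
    (s : ℝ) (hs0 : 0 < s) (hs1 : ENNReal.ofReal s < dimH Λ)
    (ε : ℝ) (hε : 0 < ε) :
    ∃ δ > (0 : ℝ), ∀ G : CPLIFS m l, CPLIFS.Close δ F G →
      pressure G.f s < pressure F.f s + ε := by
  exact h_final F hno s hs0 ε hε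

end
end
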